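/- arXiv:1305.3120 — 11 statements merged into one kernel-verified Lean document; each statement's English description precedes it below -/
import Mathlib

section
/- Let Θ ⊆ ℝ^p be a convex set, f : ℝ^p → ℝ, κ ∈ Θ, and let g ∈ S_L(f,κ) be a first-order surrogate of f near κ on Θ. Let h := g − f and let θ' be any minimizer of g over Θ. Then (i) |h(θ)| ≤ (L/2)‖θ − κ‖₂² for all θ ∈ ℝ^p, and (ii) f(θ') ≤ f(θ) + (L/2)‖θ − κ‖₂² for all θ ∈ Θ. -/
/-! With `h = g - f`, restrict `h` to the segment from `κ` to `θ`: the derivative of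
`t ↦ h (κ + t • (θ - κ))` is `⟪∇h (κ + t • (θ - κ)), θ - κ⟫`, which is at most `L * t * ‖θ - κ‖ ^ 2`
in absolute value because `∇h` is `L`-Lipschitz and vanishes at `κ`. Integrating this bound over
`[0, 1]`, in the form of a mean value inequality, bounds `|h θ|`. Majorization and minimality
then give `f θ' ≤ g θ' ≤ g θ = f θ + h θ`, hence the second inequality. -/

/-- `g` is a first-order surrogate of `f` near `κ` on `Θ` with constant `L`
(the class `S_L(f,κ)`): `g` majorizes `f` at its minimizers over `Θ`, and the
approximation error `h := g - f` is differentiable with `L`-Lipschitz gradient,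
vanishing together with its gradient at `κ`. -/
def IsFirstOrderSurrogate {E : Type*} [NormedAddCommGroup E] [InnerProductSpace ℝ E]
    [CompleteSpace E] (Θ : Set E) (L : ℝ) (f g : E → ℝ) (κ : E) : Prop :=
  (∀ θ' ∈ Θ, (∀ θ ∈ Θ, g θ' ≤ g θ) → f θ' ≤ g θ') ∧
  Differentiable ℝ (fun θ => g θ - f θ) ∧
  (∀ x y : E, ‖gradient (fun θ => g θ - f θ) x - gradient (fun θ => g θ - f θ) y‖ ≤ L * ‖x - y‖) ∧
  g κ - f κ = 0 ∧
  gradient (fun θ => g θ - f θ) κ = 0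

/-- Descent lemma at a zero `κ` of both `h` and its gradient. -/
lemma abs_le_of_lipschitz_gradient {E : Type*} [NormedAddCommGroup E] [InnerProductSpace ℝ E]
    [CompleteSpace E] {h : E → ℝ} {L : ℝ} {κ : E} (hd : Differentiable ℝ h)
    (hlip : ∀ x y : E, ‖gradient h x - gradient h y‖ ≤ L * ‖x - y‖)
    (h0 : h κ = 0) (hg0 : gradient h κ = 0) (θ : E) :
    |h θ| ≤ L / 2 * ‖θ - κ‖ ^ 2 := by
  have hline : ∀ t : ℝ, HasDerivAt (fun t : ℝ => h (κ + t • (θ - κ)))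
      (inner ℝ (gradient h (κ + t • (θ - κ))) (θ - κ)) t := by
    intro t
    have h1 : HasDerivAt (fun t : ℝ => κ + t • (θ - κ)) (θ - κ) t := by
      simpa using ((hasDerivAt_id t).smul_const (θ - κ)).const_add κ
    exact (hd (κ + t • (θ - κ))).hasGradientAt.hasFDerivAt.comp_hasDerivAt t h1
  have hB : ∀ t : ℝ, HasDerivAt (fun t : ℝ => L / 2 * ‖θ - κ‖ ^ 2 * t ^ 2)
      (L * ‖θ - κ‖ ^ 2 * t) t := by
    intro t
    refine ((hasDerivAt_pow 2 t).const_mul (L / 2 * ‖θ - κ‖ ^ 2)).congr_deriv ?_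
    push_cast
    ring
  have key := image_norm_le_of_norm_deriv_right_le_deriv_boundary (a := 0) (b := 1)
    (fun t _ => (hline t).continuousAt.continuousWithinAt)
    (fun t _ => (hline t).hasDerivWithinAt) (by simp [h0]) hB
    (fun t ht => by
      have h2 := hlip (κ + t • (θ - κ)) κ
      rw [hg0, sub_zero, add_sub_cancel_left, norm_smul, Real.norm_of_nonneg ht.1] at h2
      calc _ ≤ ‖gradient h (κ + t • (θ - κ))‖ * ‖θ - κ‖ := norm_inner_le_norm _ _
        _ ≤ L * (t * ‖θ - κ‖) * ‖θ - κ‖ := by gcongr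
        _ = L * ‖θ - κ‖ ^ 2 * t := by ring)
    (Set.right_mem_Icc.2 zero_le_one)
  simpa using key

theorem stmt0 {p : ℕ} (Θ : Set (EuclideanSpace ℝ (Fin p))) (hΘ : Convex ℝ Θ)
    (f g : EuclideanSpace ℝ (Fin p) → ℝ) (κ : EuclideanSpace ℝ (Fin p)) (hκ : κ ∈ Θ)
    (L : ℝ) (hL : 0 < L)
    (hsur : IsFirstOrderSurrogate Θ L f g κ)
    (θ' : EuclideanSpace ℝ (Fin p)) (hθ'Θ : θ' ∈ Θ) (hmin : ∀ θ ∈ Θ, g θ' ≤ g θ) :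
    (∀ θ : EuclideanSpace ℝ (Fin p), |g θ - f θ| ≤ L / 2 * ‖θ - κ‖ ^ 2) ∧
    (∀ θ ∈ Θ, f θ' ≤ f θ + L / 2 * ‖θ - κ‖ ^ 2) := by
  obtain ⟨hmaj, hd, hlip, h0, hg0⟩ := hsur
  have hbound := abs_le_of_lipschitz_gradient hd hlip h0 hg0
  refine ⟨hbound, fun θ hθ => ?_⟩
  linarith [hmaj θ' hθ'Θ hmin, hmin θ hθ, (abs_le.1 (hbound θ)).2]
end

section
/- Let Θ ⊆ ℝ^p be a convex set, f : ℝ^p → ℝ, κ ∈ Θ, and let g ∈ S_{L,ρ}(f,κ) be a ρ-strongly convex first-order surrogate of f near κ on Θ. Let θ' be the minimizer of g over Θ. Then for all θ ∈ Θ: f(θ') + (ρ/2)‖θ' − θ‖₂² ≤ f(θ) + (L/2)‖θ − κ‖₂². -/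
/-- `g` is `ρ`-strongly convex: `θ ↦ g θ - (ρ/2)‖θ‖²` is convex. -/
def StronglyConvex {E : Type*} [NormedAddCommGroup E] [InnerProductSpace ℝ E]
    (ρ : ℝ) (g : E → ℝ) : Prop :=
  ConvexOn ℝ Set.univ (fun θ => g θ - ρ / 2 * ‖θ‖ ^ 2)

/-- Descent lemma at a critical zero: along the segment from `κ` to `x` the derivative of `h` at
time `t` is at most `L * t * ‖x - κ‖ ^ 2`, and this bound integrates to the claim. -/
theorem le_quadratic_of_lipschitz_gradient {E : Type*} [NormedAddCommGroup E]
    [InnerProductSpace ℝ E] [CompleteSpace E] {h : E → ℝ} {L : ℝ} {κ : E}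
    (hd : Differentiable ℝ h)
    (hL : ∀ x y : E, ‖gradient h x - gradient h y‖ ≤ L * ‖x - y‖)
    (h0 : h κ = 0) (h1 : gradient h κ = 0) (x : E) :
    h x ≤ L / 2 * ‖x - κ‖ ^ 2 := by
  set d := x - κ with hdd
  have hφ : ∀ t : ℝ, HasDerivAt (fun t : ℝ => h (κ + t • d))
      (inner ℝ (gradient h (κ + t • d)) d) t := by
    intro t
    have hl : HasDerivAt (fun t : ℝ => κ + t • d) d t := by
      simpa using ((hasDerivAt_id t).smul_const d).const_add κ
    rw [inner_gradient_left]
    exact (hd (κ + t • d)).hasFDerivAt.comp_hasDerivAt t hl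
  have hB : ∀ t : ℝ, HasDerivAt (fun t : ℝ => L / 2 * ‖d‖ ^ 2 * t ^ 2) (L * t * ‖d‖ ^ 2) t := by
    intro t
    refine ((hasDerivAt_pow 2 t).const_mul (L / 2 * ‖d‖ ^ 2)).congr_deriv ?_
    push_cast
    ring
  have key := image_le_of_deriv_right_le_deriv_boundary (a := 0) (b := 1)
    (fun t _ => (hφ t).continuousAt.continuousWithinAt)
    (fun t _ => (hφ t).hasDerivWithinAt) (by simp [h0])
    (fun t _ => (hB t).continuousAt.continuousWithinAt)
    (fun t _ => (hB t).hasDerivWithinAt)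
    (fun t ht => by
      have hg : ‖gradient h (κ + t • d)‖ ≤ L * (t * ‖d‖) := by
        have := hL (κ + t • d) κ
        rwa [h1, sub_zero, add_sub_cancel_left, norm_smul, Real.norm_of_nonneg ht.1] at this
      calc inner ℝ (gradient h (κ + t • d)) d ≤ ‖gradient h (κ + t • d)‖ * ‖d‖ :=
            real_inner_le_norm _ _
        _ ≤ L * (t * ‖d‖) * ‖d‖ := by gcongr
        _ = L * t * ‖d‖ ^ 2 := by ring)
    (Set.right_mem_Icc.2 zero_le_one)
  simpa [hdd] using key

/-- Quadratic growth at a constrained minimizer. Comparing `g θ'` with the value of `g` at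
`(1 - t) • θ' + t • θ` gives the bound with `ρ` replaced by `(1 - t) * ρ`; then `t → 0⁺`. -/
theorem StronglyConvex.quadratic_growth {E : Type*} [NormedAddCommGroup E]
    [InnerProductSpace ℝ E] {Θ : Set E} (hΘ : Convex ℝ Θ) {ρ : ℝ} {g : E → ℝ}
    (hg : StronglyConvex ρ g) {θ' θ : E} (hθ' : θ' ∈ Θ) (hmin : ∀ y ∈ Θ, g θ' ≤ g y)
    (hθ : θ ∈ Θ) : g θ' + ρ / 2 * ‖θ' - θ‖ ^ 2 ≤ g θ := by
  have hs : StrongConvexOn Set.univ ρ g := strongConvexOn_iff_convex.2 hg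
  have hlim : Filter.Tendsto (fun t : ℝ => g θ' + (1 - t) * (ρ / 2 * ‖θ' - θ‖ ^ 2))
      (nhdsWithin 0 (Set.Ioi 0)) (nhds (g θ' + ρ / 2 * ‖θ' - θ‖ ^ 2)) := by
    have hc : Continuous (fun t : ℝ => g θ' + (1 - t) * (ρ / 2 * ‖θ' - θ‖ ^ 2)) := by fun_prop
    simpa using (hc.tendsto 0).mono_left nhdsWithin_le_nhds
  refine le_of_tendsto hlim ?_
  filter_upwards [Ioo_mem_nhdsGT (zero_lt_one' ℝ)] with t ht
  have h1t : 0 ≤ 1 - t := sub_nonneg.2 ht.2.le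
  have hc := hs.2 (Set.mem_univ θ') (Set.mem_univ θ) h1t ht.1.le (sub_add_cancel 1 t)
  have hm := hmin _ (hΘ hθ' hθ h1t ht.1.le (sub_add_cancel 1 t))
  simp only [smul_eq_mul] at hc
  refine le_of_mul_le_mul_left ?_ ht.1
  linarith

theorem stmt1 {p : ℕ} (Θ : Set (EuclideanSpace ℝ (Fin p))) (hΘ : Convex ℝ Θ)
    (f g : EuclideanSpace ℝ (Fin p) → ℝ) (κ : EuclideanSpace ℝ (Fin p)) (hκ : κ ∈ Θ)
    (L ρ : ℝ) (hL : 0 < L) (hρ : 0 < ρ)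
    (hsur : IsFirstOrderSurrogate Θ L f g κ)
    (hsc : StronglyConvex ρ g)
    (θ' : EuclideanSpace ℝ (Fin p)) (hθ'Θ : θ' ∈ Θ) (hmin : ∀ θ ∈ Θ, g θ' ≤ g θ) :
    ∀ θ ∈ Θ, f θ' + ρ / 2 * ‖θ' - θ‖ ^ 2 ≤ f θ + L / 2 * ‖θ - κ‖ ^ 2 := by
  intro θ hθ
  obtain ⟨hmaj, hd, hLip, h0, h1⟩ := hsur
  have hfg := hmaj θ' hθ'Θ hmin
  have herr := le_quadratic_of_lipschitz_gradient hd hLip h0 h1 θ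
  have hgrow := hsc.quadratic_growth hΘ hθ'Θ hmin hθ
  linarith
end

section
/- Let Θ ⊆ ℝ^p be a convex set, f : ℝ^p → ℝ be convex and bounded below on Θ, θ* a minimizer of f over Θ with f* := f(θ*), and R > 0 such that ‖θ − θ*‖₂ ≤ R for all θ ∈ Θ with f(θ) ≤ f(θ₀). Let (θ_n)_{n≥0} be a sequence in Θ such that for every n ≥ 1 there exists g_n ∈ S_L(f,θ_{n−1}) with θ_n a minimizer of g_n over Θ. Then for all n ≥ 1: f(θ_n) − f* ≤ 2LR²/(n+2). -/
/-- Quadratic upper bound for a function that vanishes to first order at `x` and has an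
`L`-Lipschitz gradient. -/
lemma le_of_gradient_lipschitz {E : Type*} [NormedAddCommGroup E] [InnerProductSpace ℝ E]
    [CompleteSpace E] {L : ℝ} {h : E → ℝ} {x : E} (hd : Differentiable ℝ h)
    (hlip : ∀ y z : E, ‖gradient h y - gradient h z‖ ≤ L * ‖y - z‖)
    (h0 : h x = 0) (hg : gradient h x = 0) (y : E) :
    h y ≤ L / 2 * ‖y - x‖ ^ 2 := by
  set v := y - x with hv
  have hder : ∀ t : ℝ, HasDerivAt (fun t : ℝ => h (x + t • v) - L / 2 * ‖v‖ ^ 2 * t ^ 2)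
      (inner ℝ (gradient h (x + t • v)) v - L * ‖v‖ ^ 2 * t) t := by
    intro t
    have h1 : HasDerivAt (fun t : ℝ => x + t • v) v t := by
      simpa using ((hasDerivAt_id t).smul_const v).const_add x
    have h2 := (hd (x + t • v)).hasGradientAt.hasFDerivAt.comp_hasDerivAt t h1
    have h3 := ((hasDerivAt_id t).pow 2).const_mul (L / 2 * ‖v‖ ^ 2)
    refine (h2.sub h3).congr_deriv ?_
    simp
    ring
  have hanti : AntitoneOn (fun t : ℝ => h (x + t • v) - L / 2 * ‖v‖ ^ 2 * t ^ 2)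
      (Set.Icc 0 1) := by
    refine antitoneOn_of_deriv_nonpos (convex_Icc 0 1)
      (fun t _ => (hder t).continuousAt.continuousWithinAt)
      (fun t _ => (hder t).differentiableAt.differentiableWithinAt) ?_
    intro t ht
    rw [interior_Icc] at ht
    rw [(hder t).deriv]
    have h1 := hlip (x + t • v) x
    rw [hg, sub_zero, add_sub_cancel_left, norm_smul, Real.norm_of_nonneg ht.1.le] at h1
    have h2 := real_inner_le_norm (gradient h (x + t • v)) v
    have h3 := mul_le_mul_of_nonneg_right h1 (norm_nonneg v)
    nlinarith
  have := hanti (Set.left_mem_Icc.2 zero_le_one) (Set.right_mem_Icc.2 zero_le_one) zero_le_one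
  simp [h0, hv] at this
  simpa [hv] using this

/-- Convex analysis of the basic scheme with surrogates in `S_L(f, θ_{n-1})`:
`f(θ_n) - f* ≤ 2LR²/(n+2)` for all `n ≥ 1`. -/
theorem stmt3 {p : ℕ} (Θ : Set (EuclideanSpace ℝ (Fin p))) (hΘ : Convex ℝ Θ)
    (f : EuclideanSpace ℝ (Fin p) → ℝ) (hconv : ConvexOn ℝ Set.univ f)
    (hbdd : ∃ B : ℝ, ∀ θ ∈ Θ, B ≤ f θ)
    (θstar : EuclideanSpace ℝ (Fin p)) (hθstarΘ : θstar ∈ Θ)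
    (hminf : ∀ θ ∈ Θ, f θstar ≤ f θ)
    (L R : ℝ) (hL : 0 < L) (hR : 0 < R)
    (θs : ℕ → EuclideanSpace ℝ (Fin p)) (hθsΘ : ∀ n, θs n ∈ Θ)
    (hlevel : ∀ θ ∈ Θ, f θ ≤ f (θs 0) → ‖θ - θstar‖ ≤ R)
    (gs : ℕ → EuclideanSpace ℝ (Fin p) → ℝ)
    (hsur : ∀ n : ℕ, IsFirstOrderSurrogate Θ L f (gs (n + 1)) (θs n))
    (hmin : ∀ n : ℕ, ∀ θ ∈ Θ, gs (n + 1) (θs (n + 1)) ≤ gs (n + 1) θ) :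
    ∀ n : ℕ, 1 ≤ n → f (θs n) - f θstar ≤ 2 * L * R ^ 2 / ((n : ℝ) + 2) := by
  have key : ∀ n, ∀ θ ∈ Θ, f (θs (n + 1)) ≤ f θ + L / 2 * ‖θ - θs n‖ ^ 2 := by
    intro n θ hθ
    obtain ⟨hmaj, hd, hlip, h0, hg⟩ := hsur n
    have h1 := hmaj _ (hθsΘ (n + 1)) (hmin n)
    have h2 := hmin n θ hθ
    have h3 := le_of_gradient_lipschitz hd hlip h0 hg θ
    linarith
  have hdec : ∀ n, f (θs n) ≤ f (θs 0) := by
    intro n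
    induction n with
    | zero => exact le_rfl
    | succ n ih =>
      have := key n (θs n) (hθsΘ n)
      simp at this
      exact this.trans ih
  have step : ∀ n, ∀ a : ℝ, 0 ≤ a → a ≤ 1 →
      f (θs (n + 1)) - f θstar ≤ (1 - a) * (f (θs n) - f θstar) + L * R ^ 2 / 2 * a ^ 2 := by
    intro n a ha ha1
    have h1 := key n _ (hΘ (hθsΘ n) hθstarΘ (sub_nonneg.2 ha1) ha (sub_add_cancel 1 a))
    have h2 := hconv.2 (Set.mem_univ (θs n)) (Set.mem_univ θstar) (sub_nonneg.2 ha1) ha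
      (sub_add_cancel 1 a)
    have h3 : (1 - a) • θs n + a • θstar - θs n = -(a • (θs n - θstar)) := by module
    have hnorm := pow_le_pow_left₀ (norm_nonneg _) (hlevel _ (hθsΘ n) (hdec n)) 2
    rw [h3, norm_neg, norm_smul, Real.norm_of_nonneg ha, mul_pow] at h1
    have h4 := mul_le_mul_of_nonneg_left hnorm (by positivity : 0 ≤ L / 2 * a ^ 2)
    simp only [smul_eq_mul] at h2
    linarith
  have hC : 0 < L * R ^ 2 := by positivity
  intro n hn
  induction n, hn using Nat.le_induction with
  | base =>
    have := step 0 1 zero_le_one le_rfl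
    norm_num at this ⊢
    linarith
  | succ n hn ih =>
    have hm : (0 : ℝ) ≤ n := n.cast_nonneg
    have ha1 : 2 / ((n : ℝ) + 2) ≤ 1 := (div_le_one (by positivity)).2 (by linarith)
    have h1 := step n (2 / ((n : ℝ) + 2)) (by positivity) ha1
    have h2 := mul_le_mul_of_nonneg_left ih (sub_nonneg.2 ha1)
    -- The recursion closes because `(n + 1) (n + 3) ≤ (n + 2) ^ 2`.
    have h3 : (1 - 2 / ((n : ℝ) + 2)) * (2 * L * R ^ 2 / ((n : ℝ) + 2))
        + L * R ^ 2 / 2 * (2 / ((n : ℝ) + 2)) ^ 2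
        = 2 * L * R ^ 2 * ((n + 1) / ((n : ℝ) + 2) ^ 2) := by
      field_simp
      ring
    have h4 : ((n : ℝ) + 1) / ((n : ℝ) + 2) ^ 2 ≤ 1 / ((n : ℝ) + 3) := by
      rw [div_le_div_iff₀ (by positivity) (by positivity)]
      nlinarith
    have h5 := mul_le_mul_of_nonneg_left h4 (by positivity : 0 ≤ 2 * L * R ^ 2)
    have h6 : 2 * L * R ^ 2 / (((n + 1 : ℕ) : ℝ) + 2) = 2 * L * R ^ 2 * (1 / ((n : ℝ) + 3)) := by
      push_cast
      rw [mul_one_div]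
      congr 1
      ring
    rw [h6]
    linarith
end

section
/- Let Θ ⊆ ℝ^p be a convex set, f : ℝ^p → ℝ be convex with a minimizer θ* over Θ and f* := f(θ*). Let ρ ≥ L > 0 and let (θ_n)_{n≥0} be a sequence in Θ such that for every n ≥ 1 there exists g_n ∈ S_{L,ρ}(f,θ_{n−1}) (a ρ-strongly convex first-order surrogate) with θ_n the minimizer of g_n over Θ. Then for all n ≥ 1: f(θ_n) − f* ≤ L‖θ₀ − θ*‖₂²/(2n). -/
/-- The approximation error of a first-order surrogate is at most quadratic around `κ`: the
descent-lemma estimate for a function with `L`-Lipschitz gradient vanishing to first order. -/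
lemma IsFirstOrderSurrogate.sub_le {E : Type*} [NormedAddCommGroup E] [InnerProductSpace ℝ E]
    [CompleteSpace E] {Θ : Set E} {L : ℝ} {f g : E → ℝ} {κ : E}
    (hs : IsFirstOrderSurrogate Θ L f g κ) (x : E) :
    g x - f x ≤ L / 2 * ‖x - κ‖ ^ 2 := by
  obtain ⟨-, hd, hlip, h0, hg0⟩ := hs
  set h : E → ℝ := fun θ => g θ - f θ with hh
  -- The error minus the quadratic bound is nonincreasing along the segment from `κ` to `x`.
  have hderiv : ∀ t : ℝ, HasDerivAt
      (fun t : ℝ => h (κ + t • (x - κ)) - L / 2 * ‖x - κ‖ ^ 2 * t ^ 2)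
      (inner ℝ (gradient h (κ + t • (x - κ))) (x - κ) - L * ‖x - κ‖ ^ 2 * t) t := by
    intro t
    have h1 : HasDerivAt (fun t : ℝ => κ + t • (x - κ)) (x - κ) t := by
      simpa using ((hasDerivAt_id t).smul_const (x - κ)).const_add κ
    have h2 := (hd (κ + t • (x - κ))).hasGradientAt.hasFDerivAt.comp_hasDerivAt t h1
    have h3 := ((hasDerivAt_id t).pow 2).const_mul (L / 2 * ‖x - κ‖ ^ 2)
    refine (h2.sub h3).congr_deriv ?_
    simp only [InnerProductSpace.toDual_apply_apply, id_eq]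
    push_cast
    ring
  have hanti : AntitoneOn (fun t : ℝ => h (κ + t • (x - κ)) - L / 2 * ‖x - κ‖ ^ 2 * t ^ 2)
      (Set.Icc 0 1) := by
    refine antitoneOn_of_deriv_nonpos (convex_Icc 0 1)
      (fun t _ => (hderiv t).continuousAt.continuousWithinAt)
      (fun t _ => (hderiv t).differentiableAt.differentiableWithinAt) fun t ht => ?_
    rw [interior_Icc] at ht
    rw [(hderiv t).deriv]
    have hnorm : ‖gradient h (κ + t • (x - κ))‖ ≤ L * (t * ‖x - κ‖) := by
      simpa [hg0, norm_smul, abs_of_pos ht.1] using hlip (κ + t • (x - κ)) κ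
    have hcs := real_inner_le_norm (gradient h (κ + t • (x - κ))) (x - κ)
    have hmul := mul_le_mul_of_nonneg_right hnorm (norm_nonneg (x - κ))
    linarith
  have h01 := hanti (Set.left_mem_Icc.2 zero_le_one) (Set.right_mem_Icc.2 zero_le_one) zero_le_one
  have hκ : h κ = 0 := h0
  simp [hκ] at h01
  exact h01

/-- A `ρ`-strongly convex function grows at least quadratically away from a minimizer over a
convex set. -/
lemma StronglyConvex.add_le_of_isMin {E : Type*} [NormedAddCommGroup E] [InnerProductSpace ℝ E]
    {Θ : Set E} (hΘ : Convex ℝ Θ) {ρ : ℝ} {g : E → ℝ} (hg : StronglyConvex ρ g) {z x : E}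
    (hz : z ∈ Θ) (hx : x ∈ Θ) (hmin : ∀ θ ∈ Θ, g z ≤ g θ) :
    g z + ρ / 2 * ‖z - x‖ ^ 2 ≤ g x := by
  have hsc : StrongConvexOn Set.univ ρ g := strongConvexOn_iff_convex.2 hg
  have key : ∀ t ∈ Set.Ioo (0 : ℝ) 1, (1 - t) * (ρ / 2 * ‖z - x‖ ^ 2) ≤ g x - g z := by
    intro t ht
    have h1 := hsc.2 (Set.mem_univ z) (Set.mem_univ x) (sub_nonneg.2 ht.2.le) ht.1.le
      (sub_add_cancel 1 t)
    have h2 := hmin _ (hΘ hz hx (sub_nonneg.2 ht.2.le) ht.1.le (sub_add_cancel 1 t))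
    simp only [smul_eq_mul] at h1
    refine le_of_mul_le_mul_left ?_ ht.1
    linarith
  -- The claim is the limit `t → 0` of the comparison with `(1 - t) • z + t • x`.
  have hlim : Filter.Tendsto (fun t : ℝ => (1 - t) * (ρ / 2 * ‖z - x‖ ^ 2)) (nhdsWithin 0 (Set.Ioi 0))
      (nhds (ρ / 2 * ‖z - x‖ ^ 2)) := by
    have hc : Continuous fun t : ℝ => (1 - t) * (ρ / 2 * ‖z - x‖ ^ 2) := by fun_prop
    simpa using (hc.tendsto 0).mono_left nhdsWithin_le_nhds
  have := le_of_tendsto hlim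
    (Filter.mem_of_superset (Ioo_mem_nhdsGT (zero_lt_one' ℝ)) key)
  linarith

/-- Convex analysis of the basic scheme with `ρ`-strongly convex surrogates in
`S_{L,ρ}(f, θ_{n-1})`, `ρ ≥ L`: `f(θ_n) - f* ≤ L‖θ₀ - θ*‖²/(2n)` for `n ≥ 1`. -/
theorem stmt5 {p : ℕ} (Θ : Set (EuclideanSpace ℝ (Fin p))) (hΘ : Convex ℝ Θ)
    (f : EuclideanSpace ℝ (Fin p) → ℝ) (hconv : ConvexOn ℝ Set.univ f)
    (θstar : EuclideanSpace ℝ (Fin p)) (hθstarΘ : θstar ∈ Θ)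
    (hminf : ∀ θ ∈ Θ, f θstar ≤ f θ)
    (L ρ : ℝ) (hL : 0 < L) (hρL : L ≤ ρ)
    (θs : ℕ → EuclideanSpace ℝ (Fin p)) (hθsΘ : ∀ n, θs n ∈ Θ)
    (gs : ℕ → EuclideanSpace ℝ (Fin p) → ℝ)
    (hsur : ∀ n : ℕ, IsFirstOrderSurrogate Θ L f (gs (n + 1)) (θs n))
    (hsc : ∀ n : ℕ, StronglyConvex ρ (gs (n + 1)))
    (hmin : ∀ n : ℕ, ∀ θ ∈ Θ, gs (n + 1) (θs (n + 1)) ≤ gs (n + 1) θ) :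
    ∀ n : ℕ, 1 ≤ n → f (θs n) - f θstar ≤ L * ‖θs 0 - θstar‖ ^ 2 / (2 * (n : ℝ)) := by
  have hup : ∀ n, f (θs (n + 1)) ≤ gs (n + 1) (θs (n + 1)) := fun n =>
    (hsur n).1 _ (hθsΘ _) (hmin n)
  have hdesc : ∀ n, f (θs (n + 1)) ≤ f (θs n) := fun n => by
    have h0 := (hsur n).2.2.2.1
    linarith [hup n, hmin n _ (hθsΘ n)]
  have hstep : ∀ n, f (θs (n + 1)) - f θstar ≤
      L / 2 * (‖θs n - θstar‖ ^ 2 - ‖θs (n + 1) - θstar‖ ^ 2) := fun n => by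
    have h1 := (hsc n).add_le_of_isMin hΘ (hθsΘ (n + 1)) hθstarΘ (hmin n)
    have h2 := (hsur n).sub_le θstar
    rw [norm_sub_rev] at h2
    have h3 := mul_le_mul_of_nonneg_right hρL (sq_nonneg ‖θs (n + 1) - θstar‖)
    linarith [hup n]
  have hsum : ∀ n : ℕ, n * (f (θs n) - f θstar) ≤
      L / 2 * (‖θs 0 - θstar‖ ^ 2 - ‖θs n - θstar‖ ^ 2) := by
    intro n
    induction n with
    | zero => simp
    | succ k ih =>
      have h1 := mul_le_mul_of_nonneg_left (hdesc k) (Nat.cast_nonneg (α := ℝ) k)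
      push_cast
      linarith [hstep k]
  intro n hn
  have hn' : (0 : ℝ) < n := by exact_mod_cast hn
  rw [le_div_iff₀ (by positivity)]
  have := mul_nonneg hL.le (sq_nonneg ‖θs n - θstar‖)
  linarith [hsum n]
end

section
/- Let Θ ⊆ ℝ^p be a convex set, f : ℝ^p → ℝ be convex with a minimizer θ* over Θ and f* := f(θ*), and R > 0 such that ‖θ − θ*‖₂ ≤ R for all θ ∈ Θ with f(θ) ≤ f(θ₀). Let (θ_n)_{n≥0} be a sequence in Θ and (g_n)_{n≥1} functions such that for every n ≥ 1: g_n(θ') ≥ f(θ') for every θ' minimizing g_n over Θ, the error h_n := g_n − f is twice differentiable with h_n(θ_{n−1}) = 0, ∇h_n(θ_{n−1}) = 0, ∇²h_n(θ_{n−1}) = 0 and ∇²h_n is M-Lipschitz continuous, and θ_n is a minimizer of g_n over Θ. Then for all n ≥ 1: f(θ_n) − f* ≤ 9MR³/(2(n+3)²). -/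
/-!
Taylor's formula turns the vanishing of `h_n` to second order at `θ_{n-1}` and the Lipschitz bound
on its Hessian into `|h_n θ| ≤ M/6 ‖θ - θ_{n-1}‖³` (`norm_le_of_norm_fderiv_le_pow`, applied once to
`∇h_n` and once to `h_n`). Comparing the minimizer `θ_n` of `g_n` with the point
`(1 - α) θ_{n-1} + α θ*`, convexity of `f` gives, for the gap `r_n = f(θ_n) - f*` and every
`α ∈ [0, 1]`, the recursion `r_n ≤ (1 - α) r_{n-1} + α³ M R³ / 6`. The radius `R` applies at every
step because `f(θ_n)` is nonincreasing. Taking `α = 1` at the first step and `α = 3 / (n + 3)` from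
step `n` to step `n + 1` gives the rate by induction.
-/

/-- Taylor-type estimate by integration along the segment from `x` to `y`: a function vanishing at
`x` whose derivative is `O(‖y - x‖ ^ k)` is itself `O(‖y - x‖ ^ (k + 1))`, with the constant
divided by `k + 1`. -/
theorem norm_le_of_norm_fderiv_le_pow {E G : Type*} [NormedAddCommGroup E] [NormedSpace ℝ E]
    [NormedAddCommGroup G] [NormedSpace ℝ G] {F : E → G} (hF : Differentiable ℝ F) {x : E}
    (hx : F x = 0) {C : ℝ} {k : ℕ} (hC : ∀ y, ‖fderiv ℝ F y‖ ≤ C * ‖y - x‖ ^ k) (y : E) :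
    ‖F y‖ ≤ C / (k + 1) * ‖y - x‖ ^ (k + 1) := by
  have hd : ∀ t : ℝ, HasDerivAt (fun t : ℝ => F (x + t • (y - x)))
      (fderiv ℝ F (x + t • (y - x)) (y - x)) t := by
    intro t
    have h1 : HasDerivAt (fun t : ℝ => x + t • (y - x)) (y - x) t := by
      simpa using ((hasDerivAt_id t).smul_const (y - x)).const_add x
    exact (hF _).hasFDerivAt.comp_hasDerivAt t h1
  have hB : ∀ t : ℝ, HasDerivAt (fun t : ℝ => C / (k + 1) * ‖y - x‖ ^ (k + 1) * t ^ (k + 1))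
      (C * ‖y - x‖ ^ (k + 1) * t ^ k) t := by
    intro t
    have hk : (k : ℝ) + 1 ≠ 0 := by positivity
    refine ((hasDerivAt_pow (k + 1) t).const_mul
      (C / (k + 1) * ‖y - x‖ ^ (k + 1))).congr_deriv ?_
    push_cast
    field_simp
  have key := image_norm_le_of_norm_deriv_right_le_deriv_boundary
    (f := fun t : ℝ => F (x + t • (y - x))) (a := 0) (b := 1)
    (fun t _ => (hd t).continuousAt.continuousWithinAt)
    (fun t _ => (hd t).hasDerivWithinAt) (by simp [hx]) hB (by
      intro t ht
      have h1 := hC (x + t • (y - x))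
      rw [add_sub_cancel_left, norm_smul, Real.norm_of_nonneg ht.1] at h1
      calc _ ≤ ‖fderiv ℝ F (x + t • (y - x))‖ * ‖y - x‖ := ContinuousLinearMap.le_opNorm _ _
        _ ≤ C * (t * ‖y - x‖) ^ k * ‖y - x‖ := by gcongr
        _ = _ := by ring)
    (Set.right_mem_Icc.2 zero_le_one)
  simpa using key


/-- Second-order surrogate analysis: with surrogates whose errors vanish to
second order at `θ_{n-1}` and have `M`-Lipschitz Hessians, the basic scheme
satisfies `f(θ_n) - f* ≤ 9MR³/(2(n+3)²)` for all `n ≥ 1`. -/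
theorem stmt7 {p : ℕ} (Θ : Set (EuclideanSpace ℝ (Fin p))) (hΘ : Convex ℝ Θ)
    (f : EuclideanSpace ℝ (Fin p) → ℝ) (hconv : ConvexOn ℝ Set.univ f)
    (θstar : EuclideanSpace ℝ (Fin p)) (hθstarΘ : θstar ∈ Θ)
    (hminf : ∀ θ ∈ Θ, f θstar ≤ f θ)
    (M R : ℝ) (hM : 0 < M) (hR : 0 < R)
    (θs : ℕ → EuclideanSpace ℝ (Fin p)) (hθsΘ : ∀ n, θs n ∈ Θ)
    (hlevel : ∀ θ ∈ Θ, f θ ≤ f (θs 0) → ‖θ - θstar‖ ≤ R)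
    (gs : ℕ → EuclideanSpace ℝ (Fin p) → ℝ)
    -- majorization at minimizers of the surrogate over Θ
    (hmaj : ∀ n : ℕ, ∀ θ' ∈ Θ, (∀ θ ∈ Θ, gs (n + 1) θ' ≤ gs (n + 1) θ) →
      f θ' ≤ gs (n + 1) θ')
    -- the error h_n := g_n - f is twice differentiable
    (hdiff : ∀ n : ℕ, Differentiable ℝ (fun θ => gs (n + 1) θ - f θ))
    (hdiff2 : ∀ n : ℕ, Differentiable ℝ (fderiv ℝ (fun θ => gs (n + 1) θ - f θ)))
    -- h_n, its gradient and its Hessian vanish at θ_{n-1}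
    (h0 : ∀ n : ℕ, gs (n + 1) (θs n) - f (θs n) = 0)
    (hgrad0 : ∀ n : ℕ, fderiv ℝ (fun θ => gs (n + 1) θ - f θ) (θs n) = 0)
    (hHess0 : ∀ n : ℕ, fderiv ℝ (fderiv ℝ (fun θ => gs (n + 1) θ - f θ)) (θs n) = 0)
    -- the Hessian of h_n is M-Lipschitz (in operator norm)
    (hHessLip : ∀ n : ℕ, ∀ x y : EuclideanSpace ℝ (Fin p),
      ‖fderiv ℝ (fderiv ℝ (fun θ => gs (n + 1) θ - f θ)) x -
        fderiv ℝ (fderiv ℝ (fun θ => gs (n + 1) θ - f θ)) y‖ ≤ M * ‖x - y‖)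
    -- θ_n minimizes g_n over Θ
    (hmin : ∀ n : ℕ, ∀ θ ∈ Θ, gs (n + 1) (θs (n + 1)) ≤ gs (n + 1) θ) :
    ∀ n : ℕ, 1 ≤ n → f (θs n) - f θstar ≤ 9 * M * R ^ 3 / (2 * ((n : ℝ) + 3) ^ 2) := by
  -- the third-order Taylor bound on the errors
  have hT : ∀ n θ, ‖gs (n + 1) θ - f θ‖ ≤ M / 6 * ‖θ - θs n‖ ^ 3 := by
    intro n θ
    have h1 := norm_le_of_norm_fderiv_le_pow (hdiff2 n) (hgrad0 n) (C := M) (k := 1)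
      (fun y => by simpa [hHess0 n] using hHessLip n y (θs n))
    have h2 := norm_le_of_norm_fderiv_le_pow (hdiff n) (h0 n) h1 θ
    norm_num at h2 ⊢
    calc _ ≤ _ := h2
      _ = _ := by ring
  have hfg : ∀ n, f (θs (n + 1)) ≤ gs (n + 1) (θs (n + 1)) := fun n =>
    hmaj n _ (hθsΘ _) (hmin n)
  have hdesc : ∀ n, f (θs n) ≤ f (θs 0) := by
    intro n
    induction n with
    | zero => exact le_rfl
    | succ n ih => linarith [hfg n, hmin n _ (hθsΘ n), h0 n]
  have hrec : ∀ n (α : ℝ), 0 ≤ α → α ≤ 1 →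
      f (θs (n + 1)) - f θstar ≤ (1 - α) * (f (θs n) - f θstar) + α ^ 3 * (M * R ^ 3) / 6 := by
    intro n α h0α h1α
    have hz := hΘ (hθsΘ n) hθstarΘ (sub_nonneg.2 h1α) h0α (by ring)
    have hc := hconv.2 (Set.mem_univ (θs n)) (Set.mem_univ θstar) (sub_nonneg.2 h1α) h0α (by ring)
    have ht := (le_abs_self _).trans (hT n ((1 - α) • θs n + α • θstar))
    have hn : ‖(1 - α) • θs n + α • θstar - θs n‖ ≤ α * R := by
      have e : (1 - α) • θs n + α • θstar - θs n = -(α • (θs n - θstar)) := by module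
      rw [e, norm_neg, norm_smul, Real.norm_of_nonneg h0α]
      exact mul_le_mul_of_nonneg_left (hlevel _ (hθsΘ n) (hdesc n)) h0α
    have hp : M / 6 * ‖(1 - α) • θs n + α • θstar - θs n‖ ^ 3 ≤ M / 6 * (α * R) ^ 3 := by
      gcongr
    simp only [smul_eq_mul] at hc
    have e2 : M / 6 * (α * R) ^ 3 = α ^ 3 * (M * R ^ 3) / 6 := by ring
    linarith [hfg n, hmin n _ hz]
  have hK : 0 < M * R ^ 3 := by positivity
  intro n hn
  induction n, hn using Nat.le_induction with
  | base =>
    have := hrec 0 1 zero_le_one le_rfl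
    norm_num at this ⊢
    linarith
  | succ n hn ih =>
    have hm : (0 : ℝ) < (n : ℝ) + 3 := by positivity
    -- `α = 3 / (n + 3)` minimizes the recursion once `r_n` is replaced by its inductive bound
    have hα : 3 / ((n : ℝ) + 3) ≤ 1 := by
      rw [div_le_one hm]
      linarith [(Nat.cast_nonneg n : (0 : ℝ) ≤ n)]
    have h1 := hrec n (3 / ((n : ℝ) + 3)) (by positivity) hα
    have h2 := mul_le_mul_of_nonneg_left ih (sub_nonneg.2 hα)
    push_cast
    have e : ((n : ℝ) + 1 + 3) = (n + 3) + 1 := by ring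
    rw [e]
    generalize (n : ℝ) + 3 = m at *
    calc _ ≤ (1 - 3 / m) * (9 * M * R ^ 3 / (2 * m ^ 2)) + (3 / m) ^ 3 * (M * R ^ 3) / 6 := by
          linarith
      _ = 9 / 2 * (M * R ^ 3) * ((m - 2) / m ^ 3) := by field_simp; ring
      _ ≤ 9 / 2 * (M * R ^ 3) * (1 / (m + 1) ^ 2) := by
          refine mul_le_mul_of_nonneg_left ?_ (by positivity)
          rw [div_le_div_iff₀ (by positivity) (by positivity)]
          nlinarith
      _ = _ := by field_simp
end

section
/- Let Θ ⊆ ℝ^p be a nonempty bounded convex set with diameter R := max_{θ₁,θ₂∈Θ} ‖θ₁ − θ₂‖₂, and let f : ℝ^p → ℝ be convex and bounded below on Θ, with f* := min_{θ∈Θ} f(θ). Consider the Frank–Wolfe scheme: θ₀ ∈ Θ and, for each n ≥ 1, g_n is a majorant surrogate in S_{L,L}(f,θ_{n−1}); ν_n is a minimizer over Θ of θ ↦ g_n(θ) − (L/2)‖θ − θ_{n−1}‖₂²; α* is a minimizer over α ∈ [0,1] of α ↦ g_n(αν_n + (1−α)θ_{n−1}); and θ_n := α*ν_n + (1−α*)θ_{n−1}.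 Then for all n ≥ 1: f(θ_n) − f* ≤ 2LR²/(n+2). -/
/-- Descent lemma: a function with `L`-Lipschitz gradient that vanishes to first order at `κ`
lies below `L/2 ‖· - κ‖²`. -/
lemma le_half_mul_sq_of_lipschitz_gradient {E : Type*} [NormedAddCommGroup E]
    [InnerProductSpace ℝ E] [CompleteSpace E] {h : E → ℝ} {L : ℝ} {κ : E}
    (hd : Differentiable ℝ h)
    (hlip : ∀ x y : E, ‖gradient h x - gradient h y‖ ≤ L * ‖x - y‖)
    (h0 : h κ = 0) (hg0 : gradient h κ = 0) (x : E) :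
    h x ≤ L / 2 * ‖x - κ‖ ^ 2 := by
  set d := x - κ with hdd
  -- Along the segment from `κ` to `x` the difference of the two sides is nonincreasing.
  have hder : ∀ t : ℝ, HasDerivAt (fun t : ℝ => h (κ + t • d) - L / 2 * ‖d‖ ^ 2 * t ^ 2)
      (inner ℝ (gradient h (κ + t • d)) d - L * t * ‖d‖ ^ 2) t := by
    intro t
    have h1 : HasDerivAt (fun t : ℝ => κ + t • d) d t := by
      simpa using ((hasDerivAt_id t).smul_const d).const_add κ
    have h2 := (hd (κ + t • d)).hasGradientAt.hasFDerivAt.comp_hasDerivAt t h1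
    have h3 := ((hasDerivAt_id t).pow 2).const_mul (L / 2 * ‖d‖ ^ 2)
    refine (h2.sub h3).congr_deriv ?_
    simp
    ring
  have hanti : AntitoneOn (fun t : ℝ => h (κ + t • d) - L / 2 * ‖d‖ ^ 2 * t ^ 2)
      (Set.Icc 0 1) := by
    refine antitoneOn_of_deriv_nonpos (convex_Icc 0 1)
      (fun t _ => (hder t).continuousAt.continuousWithinAt)
      (fun t _ => (hder t).differentiableAt.differentiableWithinAt) ?_
    intro t ht
    rw [interior_Icc] at ht
    rw [(hder t).deriv]
    have h1 := hlip (κ + t • d) κ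
    rw [hg0, sub_zero, add_sub_cancel_left, norm_smul, Real.norm_of_nonneg ht.1.le] at h1
    have h2 := real_inner_le_norm (gradient h (κ + t • d)) d
    have h3 := mul_le_mul_of_nonneg_right h1 (norm_nonneg d)
    nlinarith
  have := hanti (Set.left_mem_Icc.2 zero_le_one) (Set.right_mem_Icc.2 zero_le_one) zero_le_one
  simp [h0, hdd] at this
  simpa [hdd] using this

/-- The quadratic in the definition of strong convexity may be centred at any point `κ`: this
changes the function by an affine one only. -/
lemma StronglyConvex.convexOn_sub_sq {E : Type*} [NormedAddCommGroup E] [InnerProductSpace ℝ E]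
    {ρ : ℝ} {g : E → ℝ} (hg : StronglyConvex ρ g) (κ : E) :
    ConvexOn ℝ Set.univ (fun θ => g θ - ρ / 2 * ‖θ - κ‖ ^ 2) := by
  refine ⟨convex_univ, fun x _ y _ a b ha hb hab => ?_⟩
  have h := hg.2 (Set.mem_univ x) (Set.mem_univ y) ha hb hab
  simp only [smul_eq_mul, norm_sub_sq_real, inner_add_left, real_inner_smul_left] at h ⊢
  obtain rfl : b = 1 - a := by linarith
  linarith

/-- Convex analysis of the Frank–Wolfe scheme with majorant surrogates in
`S_{L,L}(f, θ_{n-1})`: `f(θ_n) - f* ≤ 2LR²/(n+2)` for all `n ≥ 1`. -/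
theorem stmt8 {p : ℕ} (Θ : Set (EuclideanSpace ℝ (Fin p)))
    (hΘconv : Convex ℝ Θ) (hΘne : Θ.Nonempty)
    (R : ℝ) (hdiam : ∀ θ₁ ∈ Θ, ∀ θ₂ ∈ Θ, ‖θ₁ - θ₂‖ ≤ R)
    (f : EuclideanSpace ℝ (Fin p) → ℝ) (hconv : ConvexOn ℝ Set.univ f)
    (hbdd : BddBelow (f '' Θ)) (fstar : ℝ) (hfstar : fstar = sInf (f '' Θ))
    (L : ℝ) (hL : 0 < L)
    (θs νs : ℕ → EuclideanSpace ℝ (Fin p)) (αs : ℕ → ℝ)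
    (gs : ℕ → EuclideanSpace ℝ (Fin p) → ℝ)
    (hθ0 : θs 0 ∈ Θ)
    -- g_{n+1} is a majorant surrogate in S_{L,L}(f, θ_n)
    (hsur : ∀ n : ℕ, IsFirstOrderSurrogate Θ L f (gs (n + 1)) (θs n))
    (hmajorant : ∀ n : ℕ, ∀ θ ∈ Θ, f θ ≤ gs (n + 1) θ)
    (hsc : ∀ n : ℕ, StronglyConvex L (gs (n + 1)))
    -- search direction
    (hν : ∀ n : ℕ, νs (n + 1) ∈ Θ ∧ ∀ θ ∈ Θ,
      gs (n + 1) (νs (n + 1)) - L / 2 * ‖νs (n + 1) - θs n‖ ^ 2 ≤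
        gs (n + 1) θ - L / 2 * ‖θ - θs n‖ ^ 2)
    -- line search on the surrogate
    (hα : ∀ n : ℕ, αs (n + 1) ∈ Set.Icc (0 : ℝ) 1 ∧ ∀ a ∈ Set.Icc (0 : ℝ) 1,
      gs (n + 1) (αs (n + 1) • νs (n + 1) + (1 - αs (n + 1)) • θs n) ≤
        gs (n + 1) (a • νs (n + 1) + (1 - a) • θs n))
    -- update
    (hθ : ∀ n : ℕ, θs (n + 1) = αs (n + 1) • νs (n + 1) + (1 - αs (n + 1)) • θs n) :
    ∀ n : ℕ, 1 ≤ n → f (θs n) - fstar ≤ 2 * L * R ^ 2 / ((n : ℝ) + 2) := by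
  -- Every iterate stays in `Θ`.
  have hmem : ∀ n, θs n ∈ Θ := by
    intro n
    induction n with
    | zero => exact hθ0
    | succ n ih =>
      rw [hθ n]
      obtain ⟨h0, h1⟩ := (hα n).1
      exact hΘconv (hν n).1 ih h0 (by linarith) (by ring)
  have hstep : ∀ n, ∀ a ∈ Set.Icc (0 : ℝ) 1,
      f (θs (n + 1)) - fstar ≤ (1 - a) * (f (θs n) - fstar) + L * R ^ 2 / 2 * a ^ 2 := by
    intro n a ha
    obtain ⟨-, hd, hlip, h0, hg0⟩ := hsur n
    have hlow : gs (n + 1) (νs (n + 1)) - L / 2 * ‖νs (n + 1) - θs n‖ ^ 2 ≤ fstar := by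
      rw [hfstar]
      refine le_csInf (hΘne.image f) ?_
      rintro _ ⟨θ, hθΘ, rfl⟩
      have h1 := (hν n).2 θ hθΘ
      have h2 := le_half_mul_sq_of_lipschitz_gradient hd hlip h0 hg0 θ
      linarith
    have hφ := ((hsc n).convexOn_sub_sq (θs n)).2 (Set.mem_univ (νs (n + 1)))
      (Set.mem_univ (θs n)) ha.1 (sub_nonneg.2 ha.2) (by ring)
    have hseg : a • νs (n + 1) + (1 - a) • θs n - θs n = a • (νs (n + 1) - θs n) := by
      module
    simp only [smul_eq_mul, hseg, norm_smul, Real.norm_of_nonneg ha.1, sub_self, norm_zero] at hφ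
    have hmaj := hmajorant n _ (hmem (n + 1))
    have hls := (hα n).2 a ha
    rw [← hθ n] at hls
    have hR : ‖νs (n + 1) - θs n‖ ^ 2 ≤ R ^ 2 :=
      pow_le_pow_left₀ (norm_nonneg _) (hdiam _ (hν n).1 _ (hmem n)) 2
    have h1 := mul_le_mul_of_nonneg_left hlow ha.1
    have h2 := mul_le_mul_of_nonneg_left hR (by positivity : 0 ≤ L / 2 * a ^ 2)
    have h3 : gs (n + 1) (θs n) = f (θs n) := by linarith
    rw [h3] at hφ
    linarith
  intro n hn
  induction n, hn using Nat.le_induction with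
  | base =>
    have h := hstep 0 1 (by simp)
    norm_num at h ⊢
    have : 0 ≤ L * R ^ 2 := by positivity
    linarith
  | succ n hn ih =>
    have hn' : (1 : ℝ) ≤ n := by exact_mod_cast hn
    have ha : 2 / ((n : ℝ) + 2) ≤ 1 := by
      rw [div_le_one (by linarith)]
      linarith
    have h := hstep n (2 / ((n : ℝ) + 2)) ⟨by positivity, ha⟩
    have h1 := mul_le_mul_of_nonneg_left ih (sub_nonneg.2 ha)
    have h2 : (1 - 2 / ((n : ℝ) + 2)) * (2 * L * R ^ 2 / ((n : ℝ) + 2))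
        + L * R ^ 2 / 2 * (2 / ((n : ℝ) + 2)) ^ 2
        = 2 * L * R ^ 2 * (((n : ℝ) + 1) / ((n : ℝ) + 2) ^ 2) := by
      field_simp
      ring
    have h3 : ((n : ℝ) + 1) / ((n : ℝ) + 2) ^ 2 ≤ 1 / ((n : ℝ) + 1 + 2) := by
      rw [div_le_div_iff₀ (by positivity) (by positivity)]
      nlinarith
    have h4 := mul_le_mul_of_nonneg_left h3 (by positivity : 0 ≤ 2 * L * R ^ 2)
    rw [mul_one_div] at h4
    push_cast
    linarith
end

section
/- Let Θ ⊆ ℝ^p be a convex set, let f¹,…,f^T : ℝ^p → ℝ and f := (1/T)∑_{t=1}^T f^t. For each t ∈ {1,…,T} let κ^t ∈ Θ and let g^t : ℝ^p → ℝ be ρ-strongly convex with g^t(θ) ≥ f^t(θ) for all θ ∈ Θ, and such that h^t := g^t − f^t is differentiable with L-Lipschitz gradient, h^t(κ^t) = 0 and ∇h^t(κ^t) = 0. Let θ' be the minimizer over Θ of (1/T)∑_{t=1}^T g^t. Then for all θ ∈ Θ: f(θ') ≤ f(θ) + (1/T)∑_{t=1}^T (L/2)‖θ − κ^t‖₂²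 − (ρ/2)‖θ − θ'‖₂². -/
/-!
Fix `θ ∈ Θ` and write `G = ∑ t, gs t`, which is strongly convex with modulus `T * ρ`. Strong
convexity improves the minimality of `θ'` to quadratic growth,
`G θ' + T * (ρ / 2) * ‖θ - θ'‖ ^ 2 ≤ G θ` (`sum_add_sq_le_of_isMinOn`). On the other hand the error
`gs t - fs t` vanishes to first order at `κs t` and has `L`-Lipschitz gradient, so it is at most
`L / 2 * ‖θ - κs t‖ ^ 2` at `θ` (`le_sq_of_lipschitz_gradient`). Since `fs t θ' ≤ gs t θ'`, summing
over `t` gives the result.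
-/

/-- The descent lemma, at a point where the function and its gradient vanish. -/
lemma le_sq_of_lipschitz_gradient {E : Type*} [NormedAddCommGroup E] [InnerProductSpace ℝ E]
    [CompleteSpace E] {h : E → ℝ} {L : ℝ} {κ : E} (hd : Differentiable ℝ h)
    (hlip : ∀ x y : E, ‖gradient h x - gradient h y‖ ≤ L * ‖x - y‖)
    (h0 : h κ = 0) (hg : gradient h κ = 0) (θ : E) :
    h θ ≤ L / 2 * ‖θ - κ‖ ^ 2 := by
  -- Restrict to the segment `s ↦ κ + s • (θ - κ)` and compare derivatives with those of
  -- `s ↦ L / 2 * ‖θ - κ‖ ^ 2 * s ^ 2` on `[0, 1]`.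
  have hder : ∀ s : ℝ, HasDerivAt (fun s : ℝ => h (κ + s • (θ - κ)))
      (inner ℝ (gradient h (κ + s • (θ - κ))) (θ - κ)) s := by
    intro s
    have h1 : HasDerivAt (fun s : ℝ => κ + s • (θ - κ)) (θ - κ) s := by
      simpa using ((hasDerivAt_id s).smul_const (θ - κ)).const_add κ
    have h2 := (hd (κ + s • (θ - κ))).hasGradientAt.hasFDerivAt.comp_hasDerivAt s h1
    simpa [Function.comp_def] using h2
  have hB : ∀ s : ℝ, HasDerivAt (fun s : ℝ => L / 2 * ‖θ - κ‖ ^ 2 * s ^ 2)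
      (L * ‖θ - κ‖ ^ 2 * s) s := by
    intro s
    refine ((hasDerivAt_pow 2 s).const_mul (L / 2 * ‖θ - κ‖ ^ 2)).congr_deriv ?_
    push_cast
    ring
  have key := image_le_of_deriv_right_le_deriv_boundary (a := 0) (b := 1)
    (fun s _ => (hder s).continuousAt.continuousWithinAt)
    (fun s _ => (hder s).hasDerivWithinAt) (by simp [h0])
    (fun s _ => (hB s).continuousAt.continuousWithinAt)
    (fun s _ => (hB s).hasDerivWithinAt) ?_ (Set.right_mem_Icc.2 zero_le_one)
  · simpa using key
  · intro s hs
    have hl := hlip (κ + s • (θ - κ)) κ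
    rw [hg, sub_zero, add_sub_cancel_left, norm_smul, Real.norm_of_nonneg hs.1] at hl
    calc inner ℝ (gradient h (κ + s • (θ - κ))) (θ - κ)
        ≤ ‖gradient h (κ + s • (θ - κ))‖ * ‖θ - κ‖ := real_inner_le_norm _ _
      _ ≤ L * (s * ‖θ - κ‖) * ‖θ - κ‖ := by gcongr
      _ = L * ‖θ - κ‖ ^ 2 * s := by ring

/-- Quadratic growth of a sum of strongly convex functions away from its minimizer over a convex
set. -/
lemma sum_add_sq_le_of_isMinOn {E ι : Type*} [NormedAddCommGroup E] [InnerProductSpace ℝ E]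
    [Fintype ι] {Θ : Set E} (hΘ : Convex ℝ Θ) {g : ι → E → ℝ} {ρ : ℝ}
    (hg : ∀ i, StrongConvexOn Set.univ ρ (g i)) {θ' θ : E} (hθ' : θ' ∈ Θ)
    (hmin : IsMinOn (fun x => ∑ i, g i x) Θ θ') (hθ : θ ∈ Θ) :
    ∑ i, (g i θ' + ρ / 2 * ‖θ - θ'‖ ^ 2) ≤ ∑ i, g i θ := by
  set K := ∑ _i : ι, ρ / 2 * ‖θ - θ'‖ ^ 2 with hK
  rw [Finset.sum_add_distrib, ← hK]
  -- Compare `θ'` with `(1 - b) • θ' + b • θ`, divide by `b`, and let `b → 0⁺`.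
  have hb : ∀ b ∈ Set.Ioo (0 : ℝ) 1, ∑ i, g i θ' + (1 - b) * K ≤ ∑ i, g i θ := by
    rintro b ⟨hb0, hb1⟩
    have hm := isMinOn_iff.1 hmin _ (hΘ hθ' hθ (sub_nonneg.2 hb1.le) hb0.le (sub_add_cancel 1 b))
    have hs : ∑ i, g i ((1 - b) • θ' + b • θ) ≤
        ∑ i, ((1 - b) * g i θ' + b * g i θ - (1 - b) * b * (ρ / 2 * ‖θ - θ'‖ ^ 2)) := by
      refine Finset.sum_le_sum fun i _ => ?_
      have := (hg i).2 (Set.mem_univ θ') (Set.mem_univ θ) (sub_nonneg.2 hb1.le) hb0.le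
        (sub_add_cancel 1 b)
      rw [norm_sub_rev θ θ']
      simpa only [smul_eq_mul] using this
    rw [Finset.sum_sub_distrib, Finset.sum_add_distrib, ← Finset.mul_sum, ← Finset.mul_sum,
      ← Finset.mul_sum, ← hK] at hs
    refine le_of_mul_le_mul_left ?_ hb0
    linarith [hm.trans hs]
  have hlim : Filter.Tendsto (fun b : ℝ => ∑ i, g i θ' + (1 - b) * K)
      (nhdsWithin 0 (Set.Ioi 0)) (nhds (∑ i, g i θ' + K)) := by
    have : Continuous fun b : ℝ => ∑ i, g i θ' + (1 - b) * K := by fun_prop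
    simpa using (this.tendsto 0).mono_left nhdsWithin_le_nhds
  exact le_of_tendsto hlim (Filter.eventually_of_mem (Ioo_mem_nhdsGT zero_lt_one) hb)

/-- Key inequality for the incremental scheme MISO: if each `g^t` is a
`ρ`-strongly convex majorant first-order surrogate of `f^t` near its own
point `κ^t`, and `θ'` minimizes the average surrogate over `Θ`, then
`f(θ') ≤ f(θ) + (1/T)∑_t ((L/2)‖θ - κ^t‖² - (ρ/2)‖θ - θ'‖²)` on `Θ`. -/
theorem stmt11 {p T : ℕ} (hT : 0 < T)
    (Θ : Set (EuclideanSpace ℝ (Fin p))) (hΘ : Convex ℝ Θ)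
    (fs gs : Fin T → EuclideanSpace ℝ (Fin p) → ℝ)
    (κs : Fin T → EuclideanSpace ℝ (Fin p)) (hκs : ∀ t, κs t ∈ Θ)
    (L ρ : ℝ) (hL : 0 < L) (hρ : 0 < ρ)
    -- each g^t is ρ-strongly convex
    (hsc : ∀ t, ConvexOn ℝ Set.univ (fun θ => gs t θ - ρ / 2 * ‖θ‖ ^ 2))
    -- each g^t majorizes f^t on Θ
    (hmaj : ∀ t, ∀ θ ∈ Θ, fs t θ ≤ gs t θ)
    -- the error h^t := g^t - f^t is differentiable with L-Lipschitz gradient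
    (hdiff : ∀ t, Differentiable ℝ (fun θ => gs t θ - fs t θ))
    (hlip : ∀ t, ∀ x y : EuclideanSpace ℝ (Fin p),
      ‖gradient (fun θ => gs t θ - fs t θ) x -
        gradient (fun θ => gs t θ - fs t θ) y‖ ≤ L * ‖x - y‖)
    -- h^t and its gradient vanish at κ^t
    (h0 : ∀ t, gs t (κs t) - fs t (κs t) = 0)
    (hgrad0 : ∀ t, gradient (fun θ => gs t θ - fs t θ) (κs t) = 0)
    -- θ' minimizes (1/T) ∑_t g^t over Θ
    (θ' : EuclideanSpace ℝ (Fin p)) (hθ'Θ : θ' ∈ Θ)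
    (hmin : ∀ θ ∈ Θ, (1 / (T : ℝ)) * ∑ t, gs t θ' ≤ (1 / (T : ℝ)) * ∑ t, gs t θ) :
    ∀ θ ∈ Θ, (1 / (T : ℝ)) * ∑ t, fs t θ' ≤
      (1 / (T : ℝ)) * ∑ t, fs t θ +
        (1 / (T : ℝ)) * ∑ t, (L / 2 * ‖θ - κs t‖ ^ 2 - ρ / 2 * ‖θ - θ'‖ ^ 2) := by
  intro θ hθ
  have hT' : (0 : ℝ) < 1 / (T : ℝ) := by positivity
  have hgrow := sum_add_sq_le_of_isMinOn hΘ (fun t => strongConvexOn_iff_convex.2 (hsc t)) hθ'Θ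
    (isMinOn_iff.2 fun x hx => le_of_mul_le_mul_left (hmin x hx) hT') hθ
  have hpt : ∑ t, fs t θ' + ∑ t, gs t θ ≤ ∑ t, (gs t θ' + ρ / 2 * ‖θ - θ'‖ ^ 2) +
      (∑ t, fs t θ + ∑ t, (L / 2 * ‖θ - κs t‖ ^ 2 - ρ / 2 * ‖θ - θ'‖ ^ 2)) := by
    simp only [← Finset.sum_add_distrib]
    refine Finset.sum_le_sum fun t _ => ?_
    have h1 := le_sq_of_lipschitz_gradient (hdiff t) (hlip t) (h0 t) (hgrad0 t) θ
    linarith [hmaj t θ' hθ'Θ]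
  rw [← mul_add]
  exact mul_le_mul_of_nonneg_left (by linarith) hT'.le
end

section
/- Let f, g : ℝ^p → ℝ both be μ-strongly convex (μ ≥ 0) and differentiable with L-Lipschitz continuous gradients. Then the gradient of h := g − f is (L − μ)-Lipschitz continuous. -/
/-!
Write `D_f(x, y) = f y - f x - ⟪∇f x, y - x⟫`. Strong convexity and the Lipschitz gradient give
`μ/2 ‖y - x‖² ≤ D_f(x, y) ≤ L/2 ‖y - x‖²`, and likewise for `g`
(`bregman_lower`, `bregman_upper`). Subtracting, `|D_h(x, y)| ≤ K/2 ‖y - x‖²` for `h = g - f` and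
`K = L - μ`. No second derivative is available, so the Lipschitz bound on `∇h` is extracted
from this two-sided quadratic bound alone: for points `m ± u` around the midpoint `m` of `x` and
`y`, comparing the upper bound at one base point with the lower bound at the other gives
`⟪∇h y - ∇h x, u⟫ ≤ K (‖u‖² + ‖y - x‖² / 4)`, and it remains to take `u` parallel to
`∇h y - ∇h x` with `‖u‖ = ‖y - x‖ / 2` (`gradient_lipschitz_of_bregman`).
-/

open AffineMap in
lemma hasDerivAt_comp_lineMap {E : Type*} [NormedAddCommGroup E] [InnerProductSpace ℝ E]
    [CompleteSpace E] {f : E → ℝ} (hf : Differentiable ℝ f) (x y : E) (t : ℝ) :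
    HasDerivAt (fun s : ℝ => f (lineMap x y s))
      (inner ℝ (gradient f (lineMap x y t)) (y - x)) t := by
  have h := (hf (lineMap x y t)).hasGradientAt.hasFDerivAt.comp_hasDerivAt t
    (hasDerivAt_lineMap (a := x) (b := y) (x := t))
  simpa [Function.comp_def] using h

/-- The descent lemma. -/
lemma bregman_upper {E : Type*} [NormedAddCommGroup E] [InnerProductSpace ℝ E]
    [CompleteSpace E] {f : E → ℝ} {L : ℝ} (hf : Differentiable ℝ f)
    (hL : ∀ x y, ‖gradient f x - gradient f y‖ ≤ L * ‖x - y‖) (x y : E) :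
    f y - f x - inner ℝ (gradient f x) (y - x) ≤ L / 2 * ‖y - x‖ ^ 2 := by
  -- The defect along the segment, which decreases from its value `0` at `s = 0`.
  let ψ : ℝ → ℝ := fun s => f (AffineMap.lineMap x y s) - f x
    - s * inner ℝ (gradient f x) (y - x) - s ^ 2 * (L / 2 * ‖y - x‖ ^ 2)
  have hd : ∀ t, HasDerivAt ψ (inner ℝ (gradient f (AffineMap.lineMap x y t)) (y - x)
      - inner ℝ (gradient f x) (y - x) - t * (L * ‖y - x‖ ^ 2)) t := by
    intro t
    have h := (((hasDerivAt_comp_lineMap hf x y t).sub_const (f x)).sub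
      ((hasDerivAt_id t).mul_const (inner ℝ (gradient f x) (y - x)))).sub
      ((hasDerivAt_pow 2 t).mul_const (L / 2 * ‖y - x‖ ^ 2))
    refine h.congr_deriv ?_
    push_cast
    ring
  have hanti : AntitoneOn ψ (Set.Ici 0) := by
    refine antitoneOn_of_deriv_nonpos (convex_Ici 0)
      (fun t _ => (hd t).continuousAt.continuousWithinAt)
      (fun t _ => (hd t).differentiableAt.differentiableWithinAt) fun t ht => ?_
    rw [interior_Ici, Set.mem_Ioi] at ht
    rw [(hd t).deriv, ← inner_sub_left]
    have h1 := real_inner_le_norm (gradient f (AffineMap.lineMap x y t) - gradient f x) (y - x)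
    have h2 := hL (AffineMap.lineMap x y t) x
    have h3 : ‖AffineMap.lineMap x y t - x‖ = t * ‖y - x‖ := by
      rw [AffineMap.lineMap_apply_module', add_sub_cancel_right, norm_smul, Real.norm_of_nonneg ht.le]
    rw [h3] at h2
    have h4 := mul_le_mul_of_nonneg_right h2 (norm_nonneg (y - x))
    linarith
  have h := hanti (Set.mem_Ici.2 le_rfl) (Set.mem_Ici.2 zero_le_one) zero_le_one
  simp only [ψ, AffineMap.lineMap_apply_one, AffineMap.lineMap_apply_zero] at h
  linarith

/-- A strongly convex function lies above its tangent paraboloids. -/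
lemma bregman_lower {E : Type*} [NormedAddCommGroup E] [InnerProductSpace ℝ E]
    [CompleteSpace E] {f : E → ℝ} {μ : ℝ} (hf : Differentiable ℝ f)
    (hc : ConvexOn ℝ Set.univ (fun θ => f θ - μ / 2 * ‖θ‖ ^ 2)) (x y : E) :
    μ / 2 * ‖y - x‖ ^ 2 ≤ f y - f x - inner ℝ (gradient f x) (y - x) := by
  have hconv := hc.comp_affineMap (AffineMap.lineMap x y : ℝ →ᵃ[ℝ] E)
  have hd := (hasDerivAt_comp_lineMap hf x y 0).sub
    (((AffineMap.hasDerivAt_lineMap (a := x) (b := y) (x := (0 : ℝ))).norm_sq).const_mul (μ / 2))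
  have h := hconv.le_slope_of_hasDerivAt (x := 0) (y := 1) (Set.mem_univ _) (Set.mem_univ _)
    zero_lt_one hd
  simp only [slope_def_field, Function.comp_apply, AffineMap.lineMap_apply_one,
    AffineMap.lineMap_apply_zero, sub_zero, div_one] at h
  rw [inner_sub_right x, real_inner_self_eq_norm_sq] at h
  rw [norm_sub_sq_real, real_inner_comm]
  linarith

/-- A two-sided quadratic bound on the error of the linear approximations `v x` of `h` forces
`v` to be Lipschitz, with no loss in the constant. -/
lemma gradient_lipschitz_of_bregman {E : Type*} [NormedAddCommGroup E] [InnerProductSpace ℝ E]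
    {h : E → ℝ} {v : E → E} {K : ℝ}
    (hup : ∀ x y, h y - h x - inner ℝ (v x) (y - x) ≤ K / 2 * ‖y - x‖ ^ 2)
    (hlo : ∀ x y, -(K / 2 * ‖y - x‖ ^ 2) ≤ h y - h x - inner ℝ (v x) (y - x)) (x y : E) :
    ‖v x - v y‖ ≤ K * ‖x - y‖ := by
  rcases eq_or_ne x y with rfl | hxy
  · simp
  rcases eq_or_ne (v x) (v y) with hv | hv
    -- Here only `0 ≤ K` is needed, which the two bounds at `x`, `y` imply.
  · have hpos : 0 < ‖y - x‖ := norm_pos_iff.2 (sub_ne_zero.2 hxy.symm)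
    have h1 := (hlo x y).trans (hup x y)
    have hK : 0 ≤ K := by
      by_contra! hK
      nlinarith [mul_neg_of_neg_of_pos hK (pow_pos hpos 2)]
    rw [hv, sub_self, norm_zero]
    positivity
  have key : ∀ e u : E, y = x + (2 : ℝ) • e →
      inner ℝ (v y - v x) u ≤ K * (‖u‖ ^ 2 + ‖e‖ ^ 2) := by
    rintro e u rfl
    have a1 := hup x (x + (e + u))
    have a2 := hlo (x + (2 : ℝ) • e) (x + (e + u))
    have a3 := hup (x + (2 : ℝ) • e) (x + (e - u))
    have a4 := hlo x (x + (e - u))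
    have e1 : x + (e + u) - (x + (2 : ℝ) • e) = u - e := by module
    have e2 : x + (e - u) - (x + (2 : ℝ) • e) = -(e + u) := by module
    rw [add_sub_cancel_left] at a1 a4
    rw [e1] at a2
    rw [e2, norm_neg, inner_neg_right] at a3
    rw [norm_sub_rev] at a2
    simp only [norm_add_sq_real, norm_sub_sq_real, inner_add_right, inner_sub_right] at a1 a2 a3 a4
    rw [inner_sub_left]
    linarith
  have hd : 0 < ‖x - y‖ := norm_pos_iff.2 (sub_ne_zero.2 hxy)
  have hg : 0 < ‖v y - v x‖ := norm_pos_iff.2 (sub_ne_zero.2 hv.symm)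
  have hk := key ((1 / 2 : ℝ) • (y - x)) ((‖x - y‖ / 2 / ‖v y - v x‖) • (v y - v x)) (by module)
  have n1 : ‖(‖x - y‖ / 2 / ‖v y - v x‖) • (v y - v x)‖ = ‖x - y‖ / 2 := by
    rw [norm_smul, Real.norm_of_nonneg (by positivity)]
    field_simp
  have n2 : ‖(1 / 2 : ℝ) • (y - x)‖ = ‖x - y‖ / 2 := by
    rw [norm_smul, Real.norm_of_nonneg (by positivity), norm_sub_rev]
    ring
  have n3 : ‖x - y‖ / 2 / ‖v y - v x‖ * ‖v y - v x‖ ^ 2 = ‖x - y‖ / 2 * ‖v y - v x‖ := by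
    field_simp
  rw [n1, n2, inner_smul_right, real_inner_self_eq_norm_sq, n3] at hk
  rw [norm_sub_rev (v x)]
  refine le_of_mul_le_mul_left ?_ (half_pos hd)
  linarith


/-- If `f` and `g` are both `μ`-strongly convex and differentiable with
`L`-Lipschitz gradients, then the gradient of `h := g - f` is
`(L - μ)`-Lipschitz continuous. -/
theorem stmt13 {p : ℕ} (f g : EuclideanSpace ℝ (Fin p) → ℝ)
    (μ L : ℝ) (hμ : 0 ≤ μ)
    (hscf : ConvexOn ℝ Set.univ (fun θ => f θ - μ / 2 * ‖θ‖ ^ 2))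
    (hscg : ConvexOn ℝ Set.univ (fun θ => g θ - μ / 2 * ‖θ‖ ^ 2))
    (hdifff : Differentiable ℝ f) (hdiffg : Differentiable ℝ g)
    (hlipf : ∀ x y : EuclideanSpace ℝ (Fin p),
      ‖gradient f x - gradient f y‖ ≤ L * ‖x - y‖)
    (hlipg : ∀ x y : EuclideanSpace ℝ (Fin p),
      ‖gradient g x - gradient g y‖ ≤ L * ‖x - y‖) :
    ∀ x y : EuclideanSpace ℝ (Fin p),
      ‖gradient (fun θ => g θ - f θ) x - gradient (fun θ => g θ - f θ) y‖ ≤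
        (L - μ) * ‖x - y‖ := by
  have hgrad : ∀ x, gradient (fun θ => g θ - f θ) x = gradient g x - gradient f x := fun x => by
    simp only [gradient]
    rw [fderiv_fun_sub (hdiffg x) (hdifff x), map_sub]
  refine gradient_lipschitz_of_bregman (h := fun θ => g θ - f θ) (fun x y => ?_) (fun x y => ?_)
  · rw [hgrad, inner_sub_left]
    linarith [bregman_upper hdiffg hlipg x y, bregman_lower hdifff hscf x y]
  · rw [hgrad, inner_sub_left]
    linarith [bregman_upper hdifff hlipf x y, bregman_lower hdiffg hscg x y]
end

section
/- Let Θ₂ ⊆ ℝ^{p₂} be a nonempty closed convex set and f : ℝ^{p₁} × ℝ^{p₂} → ℝ be such that: (i) θ₁ ↦ f(θ₁,θ₂) is differentiable for all θ₂ ∈ Θ₂; (ii) θ₂ ↦ ∇₁f(θ₁,θ₂) is L-Lipschitz continuous on Θ₂ for all θ₁; (iii) θ₂ ↦ f(θ₁,θ₂) is continuous and μ-strongly convex (μ > 0) for all θ₁. Define the optimal value function f̃(θ₁) := min_{θ₂∈Θ₂} f(θ₁,θ₂) and let θ₂*(θ₁) be the unique minimizer. Then f̃ is differentiable on ℝ^{p₁}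 with ∇f̃(θ₁) = ∇₁f(θ₁, θ₂*(θ₁)) for all θ₁. -/
/-!
Two facts control the minimizer `m`. Strong convexity gives quadratic growth at the minimizer,
`f x (m x) + μ/4 * ‖y - m x‖² ≤ f x y` on `Θ₂`. The mean value inequality turns the Lipschitz bound
on the partial gradient into a bound on the mixed second difference of `f`. Adding the growth
inequalities at two points `x`, `x₀` shows that `m` is Lipschitz. Comparing values then gives
`0 ≤ f x (m x₀) - f x (m x) ≤ C * ‖x - x₀‖²`, so the optimal value function and `x ↦ f x (m x₀)`
agree to first order at `x₀`.
-/

/-- Quadratic growth at a minimizer over a convex set. Comparing with the midpoint only yields the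
constant `μ / 4` instead of the optimal `μ / 2`, which suffices here. -/
lemma quadratic_growth_of_isMin {E : Type*} [NormedAddCommGroup E] [InnerProductSpace ℝ E]
    {s : Set E} (hs : Convex ℝ s) {g : E → ℝ} {μ : ℝ}
    (hg : ConvexOn ℝ Set.univ (fun y => g y - μ / 2 * ‖y‖ ^ 2))
    {a b : E} (ha : a ∈ s) (hb : b ∈ s) (hmin : ∀ y ∈ s, g a ≤ g y) :
    g a + μ / 4 * ‖b - a‖ ^ 2 ≤ g b := by
  have h1 := hmin _ (hs ha hb (by norm_num : (0 : ℝ) ≤ 1 / 2) (by norm_num : (0 : ℝ) ≤ 1 / 2)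
    (by norm_num))
  have h2 := hg.2 (Set.mem_univ a) (Set.mem_univ b) (by norm_num : (0 : ℝ) ≤ 1 / 2)
    (by norm_num : (0 : ℝ) ≤ 1 / 2) (by norm_num)
  have h3 : ‖(1 / 2 : ℝ) • a + (1 / 2 : ℝ) • b‖ ^ 2
      = ‖a‖ ^ 2 / 2 + ‖b‖ ^ 2 / 2 - ‖b - a‖ ^ 2 / 4 := by
    rw [← smul_add, norm_smul, mul_pow, norm_add_sq_real, norm_sub_sq_real, real_inner_comm b a]
    norm_num
    ring
  simp only [smul_eq_mul] at h2
  rw [h3] at h2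
  linarith

/-- A uniform bound on the difference of two gradients bounds the mixed second difference. -/
lemma abs_mixed_difference_le {E : Type*} [NormedAddCommGroup E] [InnerProductSpace ℝ E]
    [CompleteSpace E] {u v : E → ℝ} (hu : Differentiable ℝ u) (hv : Differentiable ℝ v) {C : ℝ}
    (hC : ∀ x, ‖gradient u x - gradient v x‖ ≤ C) (x x₀ : E) :
    |(u x - v x) - (u x₀ - v x₀)| ≤ C * ‖x - x₀‖ := by
  have h := convex_univ.norm_image_sub_le_of_norm_hasFDerivWithin_le
    (f := fun x => u x - v x) (𝕜 := ℝ) (C := C) (x := x₀) (y := x)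
    (fun z _ => ((hu z).hasGradientAt.hasFDerivAt.sub
      (hv z).hasGradientAt.hasFDerivAt).hasFDerivWithinAt)
    (fun z _ => by rw [← map_sub, LinearIsometryEquiv.norm_map]; exact hC z)
    (Set.mem_univ _) (Set.mem_univ _)
  simpa using h

/-- Differentiability of the optimal value function
`f̃(θ₁) = min_{θ₂ ∈ Θ₂} f(θ₁,θ₂)`: it is differentiable with
`∇f̃(θ₁) = ∇₁f(θ₁, θ₂*(θ₁))`. -/
theorem stmt15 {p₁ p₂ : ℕ} (Θ₂ : Set (EuclideanSpace ℝ (Fin p₂)))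
    (hne : Θ₂.Nonempty) (hclosed : IsClosed Θ₂) (hconv : Convex ℝ Θ₂)
    (f : EuclideanSpace ℝ (Fin p₁) → EuclideanSpace ℝ (Fin p₂) → ℝ)
    (L μ : ℝ) (hμ : 0 < μ)
    -- θ₁ ↦ f(θ₁,θ₂) is differentiable for all θ₂ ∈ Θ₂
    (hdiff : ∀ θ₂ ∈ Θ₂, Differentiable ℝ (fun x => f x θ₂))
    -- θ₂ ↦ ∇₁f(θ₁,θ₂) is L-Lipschitz on Θ₂ for all θ₁
    (hlip : ∀ θ₁ : EuclideanSpace ℝ (Fin p₁), ∀ y ∈ Θ₂, ∀ z ∈ Θ₂,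
      ‖gradient (fun x => f x y) θ₁ - gradient (fun x => f x z) θ₁‖ ≤ L * ‖y - z‖)
    -- θ₂ ↦ f(θ₁,θ₂) is continuous and μ-strongly convex for all θ₁
    (hcont : ∀ θ₁, Continuous (f θ₁))
    (hsc : ∀ θ₁, ConvexOn ℝ Set.univ (fun y => f θ₁ y - μ / 2 * ‖y‖ ^ 2))
    -- m θ₁ is the minimizer of f(θ₁,·) over Θ₂
    (m : EuclideanSpace ℝ (Fin p₁) → EuclideanSpace ℝ (Fin p₂))
    (hm : ∀ θ₁, m θ₁ ∈ Θ₂ ∧ ∀ θ₂ ∈ Θ₂, f θ₁ (m θ₁) ≤ f θ₁ θ₂) :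
    ∀ θ₁ : EuclideanSpace ℝ (Fin p₁),
      HasGradientAt (fun x => f x (m x)) (gradient (fun x => f x (m θ₁)) θ₁) θ₁ := by
  intro x₀
  have key : ∀ x, |f x (m x) - f x (m x₀)| ≤ 4 * L ^ 2 / μ * ‖x - x₀‖ ^ 2 := by
    intro x
    obtain ⟨hx, hxm⟩ := hm x
    obtain ⟨hx0, hx0m⟩ := hm x₀
    have g1 := quadratic_growth_of_isMin hconv (hsc x) hx hx0 hxm
    have g2 := quadratic_growth_of_isMin hconv (hsc x₀) hx0 hx hx0m
    rw [norm_sub_rev] at g1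
    have h := (abs_le.1 (abs_mixed_difference_le (hdiff _ hx) (hdiff _ hx0)
      (fun z => hlip z _ hx _ hx0) x x₀)).1
    have m1 := hxm _ hx0
    have m2 := hx0m _ hx
    set d := ‖m x - m x₀‖
    set r := ‖x - x₀‖
    rw [abs_sub_comm, abs_of_nonneg (by linarith)]
    rw [div_mul_eq_mul_div, le_div_iff₀ hμ]
    -- The bounds are `f x (m x₀) - f x (m x) ≤ L d r - μ d² / 4`; the right side is at most
    -- `L² r² / μ` by completing the square.
    have h5 : f x (m x₀) - f x (m x) ≤ L * d * r - μ / 4 * d ^ 2 := by linarith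
    nlinarith [mul_le_mul_of_nonneg_right h5 hμ.le, sq_nonneg (μ * d / 2 - L * r),
      sq_nonneg (L * r)]
  have h0 : HasFDerivAt (fun x => f x (m x) - f x (m x₀))
      (0 : EuclideanSpace ℝ (Fin p₁) →L[ℝ] ℝ) x₀ := by
    refine Asymptotics.IsBigO.hasFDerivAt (n := 2) ?_ (by norm_num)
    refine Asymptotics.IsBigO.of_bound (4 * L ^ 2 / μ) (Filter.Eventually.of_forall fun x => ?_)
    simpa using key x
  have h1 := (hdiff _ (hm x₀).1 x₀).hasGradientAt.hasFDerivAt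
  have h2 := h0.add h1
  rw [zero_add] at h2
  rw [hasGradientAt_iff_hasFDerivAt]
  exact h2.congr_of_eventuallyEq (Filter.Eventually.of_forall fun x => by simp)
end

section
/- Let Θ₂ ⊆ ℝ^{p₂} be a nonempty closed convex set and f : ℝ^{p₁} × ℝ^{p₂} → ℝ be jointly convex and such that: (i) θ₁ ↦ f(θ₁,θ₂) is differentiable for all θ₂ ∈ Θ₂; (ii) θ₂ ↦ ∇₁f(θ₁,θ₂) is L-Lipschitz continuous on Θ₂ for all θ₁; (iii) θ₁ ↦ ∇₁f(θ₁,θ₂) is L'-Lipschitz continuous for all θ₂ ∈ Θ₂; (iv) θ₂ ↦ f(θ₁,θ₂) is continuous and μ-strongly convex (μ > 0) for all θ₁. Define f̃(θ₁) := min_{θ₂∈Θ₂} f(θ₁,θ₂). Fix κ₁ ∈ ℝ^{p₁}, let κ₂* := argmin_{θ₂∈Θ₂} f(κ₁,θ₂) and define g(θ₁) := f(θ₁,κ₂*). Then f̃ is convex, g(θ₁) ≥ f̃(θ₁) for all θ₁, g(κ₁) = f̃(κ₁), and the error g − f̃ is differentiable with L'-Lipschitz continuous gradient vanishing at κ₁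 (i.e., g is a majorant first-order surrogate of f̃ near κ₁ with constant L'). -/
/-!
The partial minimum `φ x = min_{θ₂ ∈ Θ₂} f(x, θ₂)` inherits convexity from joint convexity. At each
`x` it is touched from above by `F = f(·, m x)`, which satisfies the quadratic upper bound of the
descent lemma (`descent_bound`), so `φ` lies below the same quadratic. A convex function touched
from above by a quadratic with gradient `a` at `x` lies above its linearization with slope `a`
(`touching_lower_bound`), so both `φ` and
`g = f(·, m κ₁)` deviate from their linearizations at `x` by an amount in
`[0, L'/2 ‖y - x‖²]`. Hence `g - φ` deviates by at most `L'/2 ‖y - x‖²` in absolute value, which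
makes it differentiable (`hasGradientAt_of_quadratic_bound`). On an inner product space this
two-sided bound also forces the gradient to be Lipschitz with the same constant `L'`
(`norm_sub_le_of_quadratic_bound`). The gradient is `∇₁f(x, m κ₁) - ∇₁f(x, m x)`, which vanishes
at `κ₁`.
-/

section Aux

variable {E : Type*} [NormedAddCommGroup E] [InnerProductSpace ℝ E]

/-- The descent lemma: a function with `M`-Lipschitz gradient lies below its linearization plus
`M / 2 ‖y - x‖²`. -/
lemma descent_bound [CompleteSpace E] {F : E → ℝ} {M : ℝ} (hF : Differentiable ℝ F)
    (hlip : ∀ x y, ‖gradient F x - gradient F y‖ ≤ M * ‖x - y‖) (x y : E) :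
    F y ≤ F x + inner ℝ (gradient F x) (y - x) + M / 2 * ‖y - x‖ ^ 2 := by
  set v := y - x with hv
  -- The error along the segment from `x` to `y` is antitone in the parameter.
  let ψ : ℝ → ℝ := fun t => F (x + t • v) - t * inner ℝ (gradient F x) v - M / 2 * ‖v‖ ^ 2 * t ^ 2
  have hd : ∀ t, HasDerivAt ψ (inner ℝ (gradient F (x + t • v)) v - inner ℝ (gradient F x) v
      - M / 2 * ‖v‖ ^ 2 * (2 * t)) t := by
    intro t
    have h1 : HasDerivAt (fun t : ℝ => x + t • v) v t := by
      simpa using ((hasDerivAt_id t).smul_const v).const_add x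
    have h2 := (hF (x + t • v)).hasGradientAt.hasFDerivAt.comp_hasDerivAt t h1
    have h3 := (hasDerivAt_id t).mul_const (inner ℝ (gradient F x) v)
    have h4 := ((hasDerivAt_id t).pow 2).const_mul (M / 2 * ‖v‖ ^ 2)
    refine ((h2.sub h3).sub h4).congr_deriv ?_
    simp
  have hanti : AntitoneOn ψ (Set.Icc 0 1) := by
    refine antitoneOn_of_deriv_nonpos (convex_Icc 0 1)
      (fun t _ => (hd t).continuousAt.continuousWithinAt)
      (fun t _ => (hd t).differentiableAt.differentiableWithinAt) ?_
    intro t ht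
    rw [interior_Icc] at ht
    rw [(hd t).deriv, ← inner_sub_left]
    have h1 := real_inner_le_norm (gradient F (x + t • v) - gradient F x) v
    have h2 := hlip (x + t • v) x
    rw [add_sub_cancel_left, norm_smul, Real.norm_of_nonneg ht.1.le] at h2
    nlinarith [mul_le_mul_of_nonneg_right h2 (norm_nonneg v)]
  have h := hanti (Set.left_mem_Icc.2 zero_le_one) (Set.right_mem_Icc.2 zero_le_one) zero_le_one
  have hy : x + v = y := by simp [hv]
  simp only [ψ, one_smul, zero_smul, hy, add_zero] at h
  linarith

/-- If a convex function is touched from above at `x` by a quadratic with gradient `a` there, then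
`a` is a subgradient at `x`. -/
lemma touching_lower_bound {φ : E → ℝ} (hφ : ConvexOn ℝ Set.univ φ) {M : ℝ} {x a : E}
    (hup : ∀ z, φ z ≤ φ x + inner ℝ a (z - x) + M / 2 * ‖z - x‖ ^ 2) (y : E) :
    φ x + inner ℝ a (y - x) ≤ φ y := by
  -- `x` is a convex combination of `y` and the reflected point `x - t (y - x)`; then let `t → 0`.
  have key : ∀ t : ℝ, 0 < t →
      φ x + inner ℝ a (y - x) - φ y ≤ t * (M / 2 * ‖y - x‖ ^ 2) := by
    intro t ht
    have h1 := hup (x - t • (y - x))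
    have h2 := hφ.2 (Set.mem_univ (x - t • (y - x))) (Set.mem_univ y)
      (by positivity : 0 ≤ 1 / (1 + t)) (by positivity : 0 ≤ t / (1 + t)) (by field_simp)
    have hx : (1 / (1 + t)) • (x - t • (y - x)) + (t / (1 + t)) • y = x := by
      have : (1 + t) ≠ 0 := by positivity
      match_scalars <;> field_simp <;> ring
    rw [hx, smul_eq_mul, smul_eq_mul] at h2
    have h3 : (1 + t) * φ x ≤ φ (x - t • (y - x)) + t * φ y := by
      have := mul_le_mul_of_nonneg_left h2 (by positivity : 0 ≤ 1 + t)
      field_simp at this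
      linarith
    rw [sub_sub_cancel_left, inner_neg_right, inner_smul_right, norm_neg, norm_smul,
      Real.norm_of_nonneg ht.le] at h1
    refine le_of_mul_le_mul_left ?_ ht
    nlinarith
  have hlim : Filter.Tendsto (fun t : ℝ => t * (M / 2 * ‖y - x‖ ^ 2)) (nhdsWithin 0 (Set.Ioi 0))
      (nhds 0) := by
    have : Continuous (fun t : ℝ => t * (M / 2 * ‖y - x‖ ^ 2)) := by fun_prop
    simpa using (this.tendsto 0).mono_left nhdsWithin_le_nhds
  have := ge_of_tendsto hlim (Filter.eventually_of_mem self_mem_nhdsWithin key)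
  linarith

lemma hasGradientAt_of_quadratic_bound [CompleteSpace E] {h : E → ℝ} {a x : E} {M : ℝ}
    (hb : ∀ y, |h y - h x - inner ℝ a (y - x)| ≤ M / 2 * ‖y - x‖ ^ 2) : HasGradientAt h a x := by
  rw [hasGradientAt_iff_isLittleO]
  have h1 : (fun y => h y - h x - inner ℝ a (y - x)) =O[nhds x] fun y => ‖y - x‖ ^ 2 := by
    refine Asymptotics.IsBigO.of_bound (M / 2) (Filter.Eventually.of_forall fun y => ?_)
    simpa using hb y
  exact h1.trans_isLittleO (Asymptotics.isLittleO_pow_sub_sub x one_lt_two)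

/-- A two-sided quadratic bound on the linearization error of `h` forces its gradient field to be
Lipschitz with the same constant. -/
lemma norm_sub_le_of_quadratic_bound {h : E → ℝ} {G : E → E} {M : ℝ}
    (hb : ∀ x y, |h y - h x - inner ℝ (G x) (y - x)| ≤ M / 2 * ‖y - x‖ ^ 2) (x y : E) :
    ‖G x - G y‖ ≤ M * ‖x - y‖ := by
  rcases eq_or_ne x y with rfl | hxy
  · simp
  have hv : 0 < ‖x - y‖ := norm_pos_iff.2 (sub_ne_zero.2 hxy)
  -- Comparing the linearizations at `x` and `y` at the two points `(x + y) / 2 ± w`.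
  have key : ∀ w, 2 * inner ℝ (G x - G y) w ≤ M / 2 * ‖x - y‖ ^ 2 + 2 * M * ‖w‖ ^ 2 := by
    intro w
    have e1 : ((1 / 2 : ℝ) • (x + y) + w) - x = w - (1 / 2 : ℝ) • (x - y) := by module
    have e2 : ((1 / 2 : ℝ) • (x + y) + w) - y = w + (1 / 2 : ℝ) • (x - y) := by module
    have e3 : ((1 / 2 : ℝ) • (x + y) - w) - x = -(w + (1 / 2 : ℝ) • (x - y)) := by module
    have e4 : ((1 / 2 : ℝ) • (x + y) - w) - y = -(w - (1 / 2 : ℝ) • (x - y)) := by module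
    have b1 := (abs_le.1 (hb x ((1 / 2 : ℝ) • (x + y) + w))).1
    have b2 := (abs_le.1 (hb y ((1 / 2 : ℝ) • (x + y) + w))).2
    have b3 := (abs_le.1 (hb x ((1 / 2 : ℝ) • (x + y) - w))).2
    have b4 := (abs_le.1 (hb y ((1 / 2 : ℝ) • (x + y) - w))).1
    rw [e1] at b1
    rw [e2] at b2
    rw [e3] at b3
    rw [e4] at b4
    have p := parallelogram_law_with_norm ℝ w ((1 / 2 : ℝ) • (x - y))
    have hn : ‖(1 / 2 : ℝ) • (x - y)‖ = 1 / 2 * ‖x - y‖ := by rw [norm_smul]; norm_num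
    rw [hn] at p
    simp only [norm_neg, inner_neg_right, inner_add_right, inner_sub_right (𝕜 := ℝ) (G x) w,
      inner_sub_right (𝕜 := ℝ) (G y) w] at b1 b2 b3 b4
    rw [inner_sub_left]
    have p' := congrArg (fun r => M * r) p
    nlinarith
  rcases eq_or_ne (G x - G y) 0 with he | he
  · have := key 0
    rw [he] at this ⊢
    simp only [inner_zero_right, norm_zero] at this ⊢
    by_contra! hneg
    nlinarith
  · have hepos : 0 < ‖G x - G y‖ := norm_pos_iff.2 he
    -- The direction of `G x - G y` with length `‖x - y‖ / 2` optimizes the bound.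
    have h1 := key ((‖x - y‖ / (2 * ‖G x - G y‖)) • (G x - G y))
    rw [inner_smul_right, real_inner_self_eq_norm_sq, norm_smul,
      Real.norm_of_nonneg (by positivity)] at h1
    have h2 : ‖x - y‖ / (2 * ‖G x - G y‖) * ‖G x - G y‖ = ‖x - y‖ / 2 := by field_simp
    rw [h2, pow_two ‖G x - G y‖, ← mul_assoc (_ / _), h2] at h1
    refine le_of_mul_le_mul_right ?_ hv
    nlinarith

end Aux


/-- Variational surrogate: for jointly convex `f`, the function
`g(θ₁) = f(θ₁, κ₂*)` with `κ₂* = argmin_{θ₂ ∈ Θ₂} f(κ₁,θ₂)` is a majorant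
first-order surrogate of `f̃(θ₁) = min_{θ₂ ∈ Θ₂} f(θ₁,θ₂)` near `κ₁` with
constant `L'`, and `f̃` is convex. -/
theorem stmt17 {p₁ p₂ : ℕ} (Θ₂ : Set (EuclideanSpace ℝ (Fin p₂)))
    (hne : Θ₂.Nonempty) (hclosed : IsClosed Θ₂) (hconv : Convex ℝ Θ₂)
    (f : EuclideanSpace ℝ (Fin p₁) → EuclideanSpace ℝ (Fin p₂) → ℝ)
    -- f is jointly convex on ℝ^{p₁} × Θ₂
    (hjoint : ConvexOn ℝ (Set.univ ×ˢ Θ₂)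
      (fun q : EuclideanSpace ℝ (Fin p₁) × EuclideanSpace ℝ (Fin p₂) => f q.1 q.2))
    (L L' μ : ℝ) (hμ : 0 < μ)
    -- θ₁ ↦ f(θ₁,θ₂) is differentiable for all θ₂ ∈ Θ₂
    (hdiff : ∀ θ₂ ∈ Θ₂, Differentiable ℝ (fun x => f x θ₂))
    -- θ₂ ↦ ∇₁f(θ₁,θ₂) is L-Lipschitz on Θ₂ for all θ₁
    (hlip : ∀ θ₁ : EuclideanSpace ℝ (Fin p₁), ∀ y ∈ Θ₂, ∀ z ∈ Θ₂,
      ‖gradient (fun x => f x y) θ₁ - gradient (fun x => f x z) θ₁‖ ≤ L * ‖y - z‖)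
    -- θ₁ ↦ ∇₁f(θ₁,θ₂) is L'-Lipschitz for all θ₂ ∈ Θ₂
    (hlip' : ∀ θ₂ ∈ Θ₂, ∀ x y : EuclideanSpace ℝ (Fin p₁),
      ‖gradient (fun z => f z θ₂) x - gradient (fun z => f z θ₂) y‖ ≤ L' * ‖x - y‖)
    -- θ₂ ↦ f(θ₁,θ₂) is continuous and μ-strongly convex for all θ₁
    (hcont : ∀ θ₁, Continuous (f θ₁))
    (hsc : ∀ θ₁, ConvexOn ℝ Set.univ (fun y => f θ₁ y - μ / 2 * ‖y‖ ^ 2))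
    -- m θ₁ is the minimizer of f(θ₁,·) over Θ₂, so f̃ θ₁ = f θ₁ (m θ₁)
    (m : EuclideanSpace ℝ (Fin p₁) → EuclideanSpace ℝ (Fin p₂))
    (hm : ∀ θ₁, m θ₁ ∈ Θ₂ ∧ ∀ θ₂ ∈ Θ₂, f θ₁ (m θ₁) ≤ f θ₁ θ₂)
    -- fixed point κ₁, with κ₂* := m κ₁ and g := fun x => f x (m κ₁)
    (κ₁ : EuclideanSpace ℝ (Fin p₁)) :
    ConvexOn ℝ Set.univ (fun x => f x (m x)) ∧
    (∀ θ₁, f θ₁ (m θ₁) ≤ f θ₁ (m κ₁)) ∧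
    f κ₁ (m κ₁) = f κ₁ (m κ₁) ∧
    Differentiable ℝ (fun x => f x (m κ₁) - f x (m x)) ∧
    (∀ x y : EuclideanSpace ℝ (Fin p₁),
      ‖gradient (fun z => f z (m κ₁) - f z (m z)) x -
        gradient (fun z => f z (m κ₁) - f z (m z)) y‖ ≤ L' * ‖x - y‖) ∧
    gradient (fun z => f z (m κ₁) - f z (m z)) κ₁ = 0 := by
  have hfc : ConvexOn ℝ Set.univ (fun x => f x (m x)) := by
    refine ⟨convex_univ, fun x _ y _ a b ha hb hab => ?_⟩
    have h := hjoint.2 (Set.mk_mem_prod (Set.mem_univ x) (hm x).1)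
      (Set.mk_mem_prod (Set.mem_univ y) (hm y).1) ha hb hab
    exact ((hm _).2 _ (hconv (hm x).1 (hm y).1 ha hb hab)).trans h
  have hgc : ConvexOn ℝ Set.univ (fun x => f x (m κ₁)) := by
    refine ⟨convex_univ, fun x _ y _ a b ha hb hab => ?_⟩
    have h := hjoint.2 (Set.mk_mem_prod (Set.mem_univ x) (hm κ₁).1)
      (Set.mk_mem_prod (Set.mem_univ y) (hm κ₁).1) ha hb hab
    simpa [Convex.combo_self hab] using h
  have hup : ∀ θ₂ ∈ Θ₂, ∀ x y, f y θ₂ ≤ f x θ₂ + inner ℝ (gradient (fun z => f z θ₂) x) (y - x)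
      + L' / 2 * ‖y - x‖ ^ 2 :=
    fun θ₂ h x y => descent_bound (hdiff θ₂ h) (hlip' θ₂ h) x y
  have hfup : ∀ x y, f y (m y) ≤ f x (m x) + inner ℝ (gradient (fun z => f z (m x)) x) (y - x)
      + L' / 2 * ‖y - x‖ ^ 2 :=
    fun x y => ((hm y).2 _ (hm x).1).trans (hup _ (hm x).1 x y)
  let G : EuclideanSpace ℝ (Fin p₁) → EuclideanSpace ℝ (Fin p₁) := fun x =>
    gradient (fun z => f z (m κ₁)) x - gradient (fun z => f z (m x)) x
  have hb : ∀ x y, |(f y (m κ₁) - f y (m y)) - (f x (m κ₁) - f x (m x))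
      - inner ℝ (G x) (y - x)| ≤ L' / 2 * ‖y - x‖ ^ 2 := by
    intro x y
    have h1 := hup _ (hm κ₁).1 x y
    have h2 := touching_lower_bound hgc (hup _ (hm κ₁).1 x) y
    have h3 := hfup x y
    have h4 := touching_lower_bound hfc (hfup x) y
    rw [inner_sub_left, abs_le]
    constructor <;> linarith
  have hgrad : ∀ x, HasGradientAt (fun z => f z (m κ₁) - f z (m z)) (G x) x :=
    fun x => hasGradientAt_of_quadratic_bound (hb x)
  refine ⟨hfc, fun x => (hm x).2 _ (hm κ₁).1, rfl, fun x => (hgrad x).differentiableAt, ?_, ?_⟩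
  · intro x y
    rw [(hgrad x).gradient, (hgrad y).gradient]
    exact norm_sub_le_of_quadratic_bound (h := fun z => f z (m κ₁) - f z (m z)) hb x y
  · rw [(hgrad κ₁).gradient]
    exact sub_self _
end

section
/- Let f : ℝ → ℝ be convex and differentiable with L-Lipschitz continuous derivative, let x ∈ ℝ^p with x ≠ 0, and define f̃ : ℝ^p → ℝ by f̃(θ) := f(xᵀθ). Let w ∈ ℝ^p with w_i := x_i²/‖x‖₂², and for κ ∈ ℝ^p define the Jensen surrogate g(θ) := ∑_{i : x_i ≠ 0} w_i f((x_i/w_i)(θ_i − κ_i) + xᵀκ). Then g(θ) ≥ f̃(θ) for all θ ∈ ℝ^p, g(κ) = f̃(κ), and the error h := g − f̃ is differentiable with L‖x‖₂²-Lipschitz continuous gradient satisfying ∇h(κ) = 0 (i.e., g is a majorant first-order surrogate of f̃ near κ with constant L‖x‖₂²). -/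
/-!
The gradients of the surrogate `g` and of `f̃` both satisfy an inequality of co-coercive type,
`‖Δ∇‖² ≤ M ⟪Δ∇, a - b⟫` with `M = L‖x‖²`: each reduces to the scalar inequality
`(f' s - f' t)² ≤ L (f' s - f' t)(s - t)`, which holds because `f'` is monotone and `L`-Lipschitz.
It places both increments in the ball of radius `M‖a - b‖/2` centred at `(M/2)(a - b)`, so their
difference is at most `M‖a - b‖`; bounding the two increments separately would only give `2M`.
The majorization is Jensen's inequality with the weights `x_i²/‖x‖²`, which sum to one.
-/

/-- The hypotheses say that `G` and `F` lie in the closed ball having the segment from `0` to `M d`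
as a diameter, so they are at distance at most `M‖d‖`. -/
lemma norm_sub_le_of_cocoercive {E : Type*} [NormedAddCommGroup E] [InnerProductSpace ℝ E]
    {G F d : E} {M : ℝ} (hM : 0 ≤ M) (hG : ‖G‖ ^ 2 ≤ M * inner ℝ G d)
    (hF : ‖F‖ ^ 2 ≤ M * inner ℝ F d) : ‖G - F‖ ≤ M * ‖d‖ := by
  have key : ∀ H : E, ‖H‖ ^ 2 ≤ M * inner ℝ H d → ‖H - (M / 2) • d‖ ≤ M / 2 * ‖d‖ := by
    intro H hH
    refine (sq_le_sq₀ (norm_nonneg _) (by positivity)).mp ?_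
    rw [norm_sub_sq_real, inner_smul_right, norm_smul, Real.norm_of_nonneg (by positivity)]
    nlinarith
  calc ‖G - F‖ = ‖(G - (M / 2) • d) - (F - (M / 2) • d)‖ := by congr 1; abel
    _ ≤ ‖G - (M / 2) • d‖ + ‖F - (M / 2) • d‖ := norm_sub_le _ _
    _ ≤ M * ‖d‖ := by linarith [key G hG, key F hF]

lemma deriv_sub_sq_le {f : ℝ → ℝ} (hconv : ConvexOn ℝ Set.univ f) (hdiff : Differentiable ℝ f)
    {L : ℝ} (hlip : ∀ s t : ℝ, |deriv f s - deriv f t| ≤ L * |s - t|) (s t : ℝ) :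
    (deriv f s - deriv f t) ^ 2 ≤ L * ((deriv f s - deriv f t) * (s - t)) := by
  have hmono : ∀ u v, u ≤ v → deriv f u ≤ deriv f v := fun u v h =>
    hconv.monotoneOn_deriv (fun z _ => hdiff z) (Set.mem_univ u) (Set.mem_univ v) h
  have h := hlip s t
  rcases le_total s t with hst | hst
  · have := hmono s t hst
    rw [abs_of_nonpos (by linarith), abs_of_nonpos (by linarith)] at h
    nlinarith
  · have := hmono t s hst
    rw [abs_of_nonneg (by linarith), abs_of_nonneg (by linarith)] at h
    nlinarith

/-- The weight `w_i = x_i²/‖x‖²` cancels against the slope `x_i/w_i`, including in the case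
`x_i = 0`, where both sides vanish. -/
lemma weight_mul_slope {p : ℕ} {x : EuclideanSpace ℝ (Fin p)} (hx : x ≠ 0) (i : Fin p) :
    (x i ^ 2 / ‖x‖ ^ 2) * (x i / (x i ^ 2 / ‖x‖ ^ 2)) = x i := by
  have hn : ‖x‖ ≠ 0 := norm_ne_zero_iff.mpr hx
  by_cases h : x i = 0
  · simp [h]
  · field_simp

lemma sum_weight {p : ℕ} {x : EuclideanSpace ℝ (Fin p)} (hx : x ≠ 0) :
    ∑ i, x i ^ 2 / ‖x‖ ^ 2 = 1 := by
  have hn : ‖x‖ ≠ 0 := norm_ne_zero_iff.mpr hx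
  rw [← Finset.sum_div, ← EuclideanSpace.real_norm_sq_eq, div_self (pow_ne_zero 2 hn)]

lemma hasGradientAt_surrogate {p : ℕ} {f : ℝ → ℝ} (hdiff : Differentiable ℝ f)
    {x : EuclideanSpace ℝ (Fin p)} (hx : x ≠ 0) (κ θ : EuclideanSpace ℝ (Fin p)) :
    HasGradientAt (fun θ : EuclideanSpace ℝ (Fin p) =>
      (∑ i, (x i ^ 2 / ‖x‖ ^ 2) *
        f ((x i / (x i ^ 2 / ‖x‖ ^ 2)) * (θ i - κ i) + ∑ j, x j * κ j)))
      (WithLp.toLp 2 fun i => x i *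
        deriv f ((x i / (x i ^ 2 / ‖x‖ ^ 2)) * (θ i - κ i) + ∑ j, x j * κ j)) θ := by
  rw [hasGradientAt_iff_hasFDerivAt]
  have hcoord : ∀ i, HasFDerivAt (fun θ : EuclideanSpace ℝ (Fin p) => θ i)
      (EuclideanSpace.proj i : EuclideanSpace ℝ (Fin p) →L[ℝ] ℝ) θ := fun i =>
    (EuclideanSpace.proj i : EuclideanSpace ℝ (Fin p) →L[ℝ] ℝ).hasFDerivAt
  have h := HasFDerivAt.fun_sum (u := Finset.univ) fun i _ =>
    ((hdiff ((x i / (x i ^ 2 / ‖x‖ ^ 2)) * (θ i - κ i) + ∑ j, x j * κ j)).hasDerivAt.comp_hasFDerivAt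
      θ ((((hcoord i).sub_const (κ i)).const_mul (x i / (x i ^ 2 / ‖x‖ ^ 2))).add_const
        (∑ j, x j * κ j))).const_mul (x i ^ 2 / ‖x‖ ^ 2)
  refine h.congr_fderiv ?_
  ext v
  simp only [sum_apply, smul_apply,
    InnerProductSpace.toDual_apply_apply, PiLp.inner_apply, smul_eq_mul, PiLp.proj_apply,
    RCLike.inner_apply, conj_trivial]
  refine Finset.sum_congr rfl fun i _ => ?_
  linear_combination (deriv f ((x i / (x i ^ 2 / ‖x‖ ^ 2)) * (θ i - κ i) + ∑ j, x j * κ j) * v i) *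
    weight_mul_slope hx i

lemma hasGradientAt_ridge {p : ℕ} {f : ℝ → ℝ} (hdiff : Differentiable ℝ f)
    (x θ : EuclideanSpace ℝ (Fin p)) :
    HasGradientAt (fun θ : EuclideanSpace ℝ (Fin p) => f (∑ j, x j * θ j))
      (deriv f (∑ j, x j * θ j) • x) θ := by
  rw [hasGradientAt_iff_hasFDerivAt]
  have hlin : HasFDerivAt (fun θ : EuclideanSpace ℝ (Fin p) => ∑ j, x j * θ j)
      (∑ j, x j • (EuclideanSpace.proj j : EuclideanSpace ℝ (Fin p) →L[ℝ] ℝ)) θ :=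
    HasFDerivAt.fun_sum fun j _ =>
      (EuclideanSpace.proj j : EuclideanSpace ℝ (Fin p) →L[ℝ] ℝ).hasFDerivAt.const_mul (x j)
  refine ((hdiff (∑ j, x j * θ j)).hasDerivAt.comp_hasFDerivAt θ hlin).congr_fderiv ?_
  ext v
  simp [PiLp.inner_apply, Finset.mul_sum, mul_comm]


/-- Jensen surrogate with weights `w_i = x_i²/‖x‖²` (the case `ν = 2`): the
function `g(θ) = ∑_i w_i f((x_i/w_i)(θ_i - κ_i) + xᵀκ)` is a majorant
first-order surrogate of `f̃(θ) = f(xᵀθ)` near `κ` with constant `L‖x‖²`.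
(Terms with `x_i = 0` have `w_i = 0` and vanish from the sum.) -/
theorem stmt19 {p : ℕ} (f : ℝ → ℝ)
    (hconv : ConvexOn ℝ Set.univ f)
    (hdiff : Differentiable ℝ f)
    (L : ℝ) (hL : 0 < L)
    (hlip : ∀ s t : ℝ, |deriv f s - deriv f t| ≤ L * |s - t|)
    (x : EuclideanSpace ℝ (Fin p)) (hx : x ≠ 0)
    (κ : EuclideanSpace ℝ (Fin p)) :
    -- with w i := (x i)²/‖x‖², g θ := ∑ i, w i * f((x i / w i) * (θ i - κ i) + xᵀκ)
    -- and f̃ θ := f(xᵀθ):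
    (∀ θ : EuclideanSpace ℝ (Fin p),
      f (∑ j, x j * θ j) ≤
        ∑ i, (x i ^ 2 / ‖x‖ ^ 2) *
          f ((x i / (x i ^ 2 / ‖x‖ ^ 2)) * (θ i - κ i) + ∑ j, x j * κ j)) ∧
    (∑ i, (x i ^ 2 / ‖x‖ ^ 2) *
        f ((x i / (x i ^ 2 / ‖x‖ ^ 2)) * (κ i - κ i) + ∑ j, x j * κ j)) =
      f (∑ j, x j * κ j) ∧
    Differentiable ℝ (fun θ : EuclideanSpace ℝ (Fin p) =>
      (∑ i, (x i ^ 2 / ‖x‖ ^ 2) *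
        f ((x i / (x i ^ 2 / ‖x‖ ^ 2)) * (θ i - κ i) + ∑ j, x j * κ j)) -
        f (∑ j, x j * θ j)) ∧
    (∀ a b : EuclideanSpace ℝ (Fin p),
      ‖gradient (fun θ : EuclideanSpace ℝ (Fin p) =>
          (∑ i, (x i ^ 2 / ‖x‖ ^ 2) *
            f ((x i / (x i ^ 2 / ‖x‖ ^ 2)) * (θ i - κ i) + ∑ j, x j * κ j)) -
            f (∑ j, x j * θ j)) a -
        gradient (fun θ : EuclideanSpace ℝ (Fin p) =>
          (∑ i, (x i ^ 2 / ‖x‖ ^ 2) *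
            f ((x i / (x i ^ 2 / ‖x‖ ^ 2)) * (θ i - κ i) + ∑ j, x j * κ j)) -
            f (∑ j, x j * θ j)) b‖ ≤ L * ‖x‖ ^ 2 * ‖a - b‖) ∧
    gradient (fun θ : EuclideanSpace ℝ (Fin p) =>
      (∑ i, (x i ^ 2 / ‖x‖ ^ 2) *
        f ((x i / (x i ^ 2 / ‖x‖ ^ 2)) * (θ i - κ i) + ∑ j, x j * κ j)) -
        f (∑ j, x j * θ j)) κ = 0 := by
  have hn : ‖x‖ ≠ 0 := norm_ne_zero_iff.mpr hx
  have hgrad := fun θ : EuclideanSpace ℝ (Fin p) =>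
    (hasGradientAt_iff_hasFDerivAt.mp (hasGradientAt_surrogate hdiff hx κ θ)).sub
      (hasGradientAt_iff_hasFDerivAt.mp (hasGradientAt_ridge hdiff x θ))
  simp only [← map_sub] at hgrad
  have hgradient := fun θ => HasGradientAt.gradient (hasGradientAt_iff_hasFDerivAt.mpr (hgrad θ))
  simp only [Pi.sub_def] at hgrad hgradient
  refine ⟨fun θ => ?_, ?_, fun θ => (hgrad θ).differentiableAt, fun a b => ?_, ?_⟩
  · have hJ := hconv.map_sum_le (t := Finset.univ) (w := fun i => x i ^ 2 / ‖x‖ ^ 2)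
      (p := fun i => (x i / (x i ^ 2 / ‖x‖ ^ 2)) * (θ i - κ i) + ∑ j, x j * κ j)
      (fun i _ => by positivity) (sum_weight hx) (fun i _ => Set.mem_univ _)
    simp only [smul_eq_mul] at hJ
    have hmean : ∑ i, (x i ^ 2 / ‖x‖ ^ 2) *
        ((x i / (x i ^ 2 / ‖x‖ ^ 2)) * (θ i - κ i) + ∑ j, x j * κ j) = ∑ j, x j * θ j := by
      simp only [mul_add, ← mul_assoc, weight_mul_slope hx]
      rw [Finset.sum_add_distrib, ← Finset.sum_mul, sum_weight hx, one_mul,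
        ← Finset.sum_add_distrib]
      exact Finset.sum_congr rfl fun i _ => by ring
    rwa [hmean] at hJ
  · simp only [sub_self, mul_zero, zero_add]
    rw [← Finset.sum_mul, sum_weight hx, one_mul]
  · rw [hgradient a, hgradient b, sub_sub_sub_comm]
    refine norm_sub_le_of_cocoercive (by positivity) ?_ ?_
    · rw [EuclideanSpace.real_norm_sq_eq, PiLp.inner_apply, Finset.mul_sum]
      refine Finset.sum_le_sum fun i _ => ?_
      have h := deriv_sub_sq_le hconv hdiff hlip
        ((x i / (x i ^ 2 / ‖x‖ ^ 2)) * (a i - κ i) + ∑ j, x j * κ j)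
        ((x i / (x i ^ 2 / ‖x‖ ^ 2)) * (b i - κ i) + ∑ j, x j * κ j)
      simp only [PiLp.sub_apply, RCLike.inner_apply, conj_trivial]
      have hslope : x i ^ 2 * (x i / (x i ^ 2 / ‖x‖ ^ 2)) = ‖x‖ ^ 2 * x i := by
        by_cases h0 : x i = 0
        · simp [h0]
        · field_simp
      generalize deriv f ((x i / (x i ^ 2 / ‖x‖ ^ 2)) * (a i - κ i) + ∑ j, x j * κ j) = A at *
      generalize deriv f ((x i / (x i ^ 2 / ‖x‖ ^ 2)) * (b i - κ i) + ∑ j, x j * κ j) = B at *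
      calc (x i * A - x i * B) ^ 2 = x i ^ 2 * (A - B) ^ 2 := by ring
        _ ≤ _ := mul_le_mul_of_nonneg_left h (sq_nonneg _)
        _ = _ := by linear_combination (L * (A - B) * (a i - b i)) * hslope
    · have h := deriv_sub_sq_le hconv hdiff hlip (∑ j, x j * a j) (∑ j, x j * b j)
      have hinner : inner ℝ x (a - b) = ∑ j, x j * a j - ∑ j, x j * b j := by
        simp [PiLp.inner_apply, sub_mul, mul_comm (x _)]
      rw [← sub_smul, norm_smul, inner_smul_left, hinner, mul_pow, Real.norm_eq_abs, sq_abs]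
      simp only [conj_trivial]
      nlinarith [mul_le_mul_of_nonneg_left h (sq_nonneg ‖x‖)]
  · rw [hgradient κ]
    ext i
    simp [mul_comm]
end
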